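/- arXiv:1801.05722 — 5 statements merged into one kernel-verified Lean document; each statement's English description precedes it below -/
import Mathlib

section
/- Let the notation be as in the context, with two splicing data (superscripts 1 and 2) and the splicing map D. Suppose that for each i in {1,2} we are given vectors z0^i in F^{ainf^i}, z1^i in F^{a0^i}, zinf^i in F^{a1^i} with B1^i z0^i = 0, Binf^i z1^i = 0, B0^i zinf^i = 0, and vectors xinf^i in F^{ainf^i}, yinf^i in F^{a1^i} with B1^i xinf^i = 0 and (D1^i + A0^i) xinf^i + B0^i yinf^i = 0; vectors x1^i in F^{a1^i}, y1^i in F^{a0^i} with B0^i x1^i = 0 and (D0^i + Ainf^i) x1^i + Binf^i y1^i = 0; and vectors x0^i in F^{a0^i}, y0^i in F^{ainf^i} with Binf^i x0^i = 0 and (Dinf^i + A1^i) x0^i + B1^i y0^i = 0. Then the vector with components (y0^1 ⊗ xinf^2 + xinf^1 ⊗ y0^2 + z0^1 ⊗ z0^2, xinf^1 ⊗ x0^2, yinf^1 ⊗ x0^2 + x1^1 ⊗ y1^2 + zinf^1 ⊗ z1^2, x0^1 ⊗ xinf^2, y1^1 ⊗ x1^2 + x0^1 ⊗ yinf^2 +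 z1^1 ⊗ zinf^2, x1^1 ⊗ x1^2) lies in the kernel of D. -/
set_option maxHeartbeats 1600000

open Matrix Module
open scoped Kronecker

abbrev F2 : Type := ZMod 2

/-- A splicing datum: the algebraic data extracted from the knot Floer homology of a knot
in a homology sphere, as in Eftekhary's splicing formula. -/
structure SplicingDatum where
  a0 : ℕ
  a1 : ℕ
  ainf : ℕ
  A0 : Matrix (Fin ainf) (Fin ainf) F2
  B0 : Matrix (Fin ainf) (Fin a1) F2
  C0 : Matrix (Fin a1) (Fin ainf) F2
  D0 : Matrix (Fin a1) (Fin a1) F2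
  A1 : Matrix (Fin a0) (Fin a0) F2
  B1 : Matrix (Fin a0) (Fin ainf) F2
  C1 : Matrix (Fin ainf) (Fin a0) F2
  D1 : Matrix (Fin ainf) (Fin ainf) F2
  Ainf : Matrix (Fin a1) (Fin a1) F2
  Binf : Matrix (Fin a1) (Fin a0) F2
  Cinf : Matrix (Fin a0) (Fin a1) F2
  Dinf : Matrix (Fin a0) (Fin a0) F2
  C0inv : Matrix (Fin a1) (Fin ainf) F2
  C1inv : Matrix (Fin ainf) (Fin a0) F2
  Cinfinv : Matrix (Fin a0) (Fin a1) F2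
  inv0_left : Matrix.fromBlocks A0 B0 C0 D0 * Matrix.fromBlocks A0 B0 C0inv D0 = 1
  inv0_right : Matrix.fromBlocks A0 B0 C0inv D0 * Matrix.fromBlocks A0 B0 C0 D0 = 1
  inv1_left : Matrix.fromBlocks A1 B1 C1 D1 * Matrix.fromBlocks A1 B1 C1inv D1 = 1
  inv1_right : Matrix.fromBlocks A1 B1 C1inv D1 * Matrix.fromBlocks A1 B1 C1 D1 = 1
  invinf_left : Matrix.fromBlocks Ainf Binf Cinf Dinf * Matrix.fromBlocks Ainf Binf Cinfinv Dinf = 1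
  invinf_right : Matrix.fromBlocks Ainf Binf Cinfinv Dinf * Matrix.fromBlocks Ainf Binf Cinf Dinf = 1
  comm0 : A0 * B0 + B0 * D0 = 0
  comm1 : A1 * B1 + B1 * D1 = 0
  comminf : Ainf * Binf + Binf * Dinf = 0
  sq0 : B1 * B0 * Binf * (B1 * B0 * Binf) = 0
  sq1 : Binf * B1 * B0 * (Binf * B1 * B0) = 0
  sqinf : B0 * Binf * B1 * (B0 * Binf * B1) = 0

/-- dimension of the kernel of the linear map induced by a matrix -/
noncomputable def kdim {m n : Type*} [Fintype n] (M : Matrix m n F2) : ℕ :=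
  finrank F2 ↥(LinearMap.ker M.mulVecLin)

/-- dimension of the cokernel of the linear map induced by a matrix -/
noncomputable def cdim {m n : Type*} [Fintype n] (M : Matrix m n F2) : ℕ :=
  finrank F2 ((m → F2) ⧸ LinearMap.range M.mulVecLin)

/-- tensor product of two vectors, as a vector indexed by the product type -/
def tensVec {m n : Type*} (x : m → F2) (y : n → F2) : m × n → F2 :=
  fun p => x p.1 * y p.2

namespace SplicingDatum

variable (d : SplicingDatum)

def X0M : Matrix (Fin d.a0) (Fin d.a0) F2 := d.B1 * d.B0 * d.Binf
def X1M : Matrix (Fin d.a1) (Fin d.a1) F2 := d.Binf * d.B1 * d.B0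
def XinfM : Matrix (Fin d.ainf) (Fin d.ainf) F2 := d.B0 * d.Binf * d.B1

def tau0 : Matrix (Fin d.ainf ⊕ Fin d.a1) (Fin d.ainf ⊕ Fin d.a1) F2 :=
  Matrix.fromBlocks d.A0 d.B0 d.C0 d.D0
def tau0inv : Matrix (Fin d.ainf ⊕ Fin d.a1) (Fin d.ainf ⊕ Fin d.a1) F2 :=
  Matrix.fromBlocks d.A0 d.B0 d.C0inv d.D0
def tau1 : Matrix (Fin d.a0 ⊕ Fin d.ainf) (Fin d.a0 ⊕ Fin d.ainf) F2 :=
  Matrix.fromBlocks d.A1 d.B1 d.C1 d.D1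
def tau1inv : Matrix (Fin d.a0 ⊕ Fin d.ainf) (Fin d.a0 ⊕ Fin d.ainf) F2 :=
  Matrix.fromBlocks d.A1 d.B1 d.C1inv d.D1
def tauinf : Matrix (Fin d.a1 ⊕ Fin d.a0) (Fin d.a1 ⊕ Fin d.a0) F2 :=
  Matrix.fromBlocks d.Ainf d.Binf d.Cinf d.Dinf
def tauinfinv : Matrix (Fin d.a1 ⊕ Fin d.a0) (Fin d.a1 ⊕ Fin d.a0) F2 :=
  Matrix.fromBlocks d.Ainf d.Binf d.Cinfinv d.Dinf

/-- the map `finf : F^{ainf+a1} → F^{a0+ainf}` -/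
def finfM : Matrix (Fin d.a0 ⊕ Fin d.ainf) (Fin d.ainf ⊕ Fin d.a1) F2 :=
  Matrix.fromBlocks 0 0 (1 : Matrix (Fin d.ainf) (Fin d.ainf) F2) 0
/-- the map `f0 : F^{a0+ainf} → F^{a1+a0}` -/
def f0M : Matrix (Fin d.a1 ⊕ Fin d.a0) (Fin d.a0 ⊕ Fin d.ainf) F2 :=
  Matrix.fromBlocks 0 0 (1 : Matrix (Fin d.a0) (Fin d.a0) F2) 0
/-- the map `f1 : F^{a1+a0} → F^{ainf+a1}` -/
def f1M : Matrix (Fin d.ainf ⊕ Fin d.a1) (Fin d.a1 ⊕ Fin d.a0) F2 :=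
  Matrix.fromBlocks 0 0 (1 : Matrix (Fin d.a1) (Fin d.a1) F2) 0

def fbarinfM : Matrix (Fin d.a0 ⊕ Fin d.ainf) (Fin d.ainf ⊕ Fin d.a1) F2 :=
  d.tau1inv * d.finfM * d.tau0
def fbar0M : Matrix (Fin d.a1 ⊕ Fin d.a0) (Fin d.a0 ⊕ Fin d.ainf) F2 :=
  d.tauinfinv * d.f0M * d.tau1
def fbar1M : Matrix (Fin d.ainf ⊕ Fin d.a1) (Fin d.a1 ⊕ Fin d.a0) F2 :=
  d.tau0inv * d.f1M * d.tauinf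

noncomputable def r0 : ℕ := d.B0.rank
noncomputable def r1 : ℕ := d.B1.rank
noncomputable def rinf : ℕ := d.Binf.rank

noncomputable def k0 : ℕ :=
  finrank F2 ↥(LinearMap.ker d.f0M.mulVecLin ⊓ LinearMap.ker d.fbar0M.mulVecLin)
noncomputable def k1 : ℕ :=
  finrank F2 ↥(LinearMap.ker d.f1M.mulVecLin ⊓ LinearMap.ker d.fbar1M.mulVecLin)
noncomputable def kinf : ℕ :=
  finrank F2 ↥(LinearMap.ker d.finfM.mulVecLin ⊓ LinearMap.ker d.fbarinfM.mulVecLin)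

noncomputable def l0 : ℕ :=
  finrank F2 ↥(LinearMap.ker (d.f0M + d.fbar0M).mulVecLin) - d.k0
noncomputable def l1 : ℕ :=
  finrank F2 ↥(LinearMap.ker (d.f1M + d.fbar1M).mulVecLin) - d.k1
noncomputable def linf : ℕ :=
  finrank F2 ↥(LinearMap.ker (d.finfM + d.fbarinfM).mulVecLin) - d.kinf

noncomputable def c0 : ℕ :=
  finrank F2 ((Fin d.a1 ⊕ Fin d.a0 → F2) ⧸
    (LinearMap.range d.f0M.mulVecLin ⊔ LinearMap.range d.fbar0M.mulVecLin))
noncomputable def c1 : ℕ :=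
  finrank F2 ((Fin d.ainf ⊕ Fin d.a1 → F2) ⧸
    (LinearMap.range d.f1M.mulVecLin ⊔ LinearMap.range d.fbar1M.mulVecLin))
noncomputable def cinf : ℕ :=
  finrank F2 ((Fin d.a0 ⊕ Fin d.ainf → F2) ⧸
    (LinearMap.range d.finfM.mulVecLin ⊔ LinearMap.range d.fbarinfM.mulVecLin))

noncomputable def dd0 : ℕ :=
  finrank F2 ↥(LinearMap.range d.f0M.mulVecLin ⊔ LinearMap.range d.fbar0M.mulVecLin) -
    finrank F2 ↥(LinearMap.range (d.f0M + d.fbar0M).mulVecLin)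
noncomputable def dd1 : ℕ :=
  finrank F2 ↥(LinearMap.range d.f1M.mulVecLin ⊔ LinearMap.range d.fbar1M.mulVecLin) -
    finrank F2 ↥(LinearMap.range (d.f1M + d.fbar1M).mulVecLin)
noncomputable def ddinf : ℕ :=
  finrank F2 ↥(LinearMap.range d.finfM.mulVecLin ⊔ LinearMap.range d.fbarinfM.mulVecLin) -
    finrank F2 ↥(LinearMap.range (d.finfM + d.fbarinfM).mulVecLin)

noncomputable def delta0 : ℕ := d.a0 - d.rinf - d.l0
noncomputable def delta1 : ℕ := d.a1 - d.r0 - d.l1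
noncomputable def deltainf : ℕ := d.ainf - d.r1 - d.linf

end SplicingDatum

namespace SplicingDatum

/-- Index type of the source of the splicing map `D`. -/
abbrev Src (e1 e2 : SplicingDatum) : Type :=
  (Fin e1.ainf × Fin e2.ainf) ⊕ (Fin e1.ainf × Fin e2.a0) ⊕ (Fin e1.a1 × Fin e2.a0) ⊕
    (Fin e1.a0 × Fin e2.ainf) ⊕ (Fin e1.a0 × Fin e2.a1) ⊕ (Fin e1.a1 × Fin e2.a1)

/-- Index type of the target of the splicing map `D`. -/
abbrev Tgt (e1 e2 : SplicingDatum) : Type :=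
  (Fin e1.a0 × Fin e2.a0) ⊕ (Fin e1.ainf × Fin e2.a1) ⊕ (Fin e1.ainf × Fin e2.a0) ⊕
    (Fin e1.a1 × Fin e2.ainf) ⊕ (Fin e1.a0 × Fin e2.ainf) ⊕ (Fin e1.a1 × Fin e2.a1)

def row1 (e1 e2 : SplicingDatum) : Matrix (Fin e1.a0 × Fin e2.a0) (Src e1 e2) F2 :=
  Matrix.fromCols ((e1.Dinf * e1.B1) ⊗ₖ (e2.B1 * e2.A0)) <|
  Matrix.fromCols ((e1.B1 * e1.A0) ⊗ₖ (1 : Matrix (Fin e2.a0) (Fin e2.a0) F2)) <|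
  Matrix.fromCols ((e1.B1 * e1.B0) ⊗ₖ (1 : Matrix (Fin e2.a0) (Fin e2.a0) F2)) <|
  Matrix.fromCols ((e1.Dinf * e1.A1) ⊗ₖ (e2.B1 * e2.A0)) <|
  Matrix.fromCols ((1 : Matrix (Fin e1.a0) (Fin e1.a0) F2) ⊗ₖ (e2.B1 * e2.B0)) 0

def row2 (e1 e2 : SplicingDatum) : Matrix (Fin e1.ainf × Fin e2.a1) (Src e1 e2) F2 :=
  Matrix.fromCols ((1 : Matrix (Fin e1.ainf) (Fin e1.ainf) F2) ⊗ₖ (e2.Binf * e2.B1)) <|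
  Matrix.fromCols ((e1.D1 * e1.A0) ⊗ₖ (e2.Binf * e2.A1)) <|
  Matrix.fromCols ((e1.D1 * e1.B0) ⊗ₖ (e2.Binf * e2.A1)) <|
  Matrix.fromCols 0 <|
  Matrix.fromCols ((e1.B0 * e1.Binf) ⊗ₖ (1 : Matrix (Fin e2.a1) (Fin e2.a1) F2))
    ((e1.B0 * e1.Ainf) ⊗ₖ (1 : Matrix (Fin e2.a1) (Fin e2.a1) F2))

def row3 (e1 e2 : SplicingDatum) : Matrix (Fin e1.ainf × Fin e2.a0) (Src e1 e2) F2 :=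
  Matrix.fromCols ((1 : Matrix (Fin e1.ainf) (Fin e1.ainf) F2) ⊗ₖ (e2.Dinf * e2.B1)) <|
  Matrix.fromCols
    ((1 : Matrix (Fin e1.ainf) (Fin e1.ainf) F2) ⊗ₖ (1 : Matrix (Fin e2.a0) (Fin e2.a0) F2) +
      (e1.D1 * e1.A0) ⊗ₖ (e2.Dinf * e2.A1)) <|
  Matrix.fromCols ((e1.D1 * e1.B0) ⊗ₖ (e2.Dinf * e2.A1)) <|
  Matrix.fromCols 0 <|
  Matrix.fromCols 0 0

def row4 (e1 e2 : SplicingDatum) : Matrix (Fin e1.a1 × Fin e2.ainf) (Src e1 e2) F2 :=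
  Matrix.fromCols ((e1.Binf * e1.B1) ⊗ₖ (1 : Matrix (Fin e2.ainf) (Fin e2.ainf) F2)) <|
  Matrix.fromCols 0 <|
  Matrix.fromCols ((1 : Matrix (Fin e1.a1) (Fin e1.a1) F2) ⊗ₖ (e2.B0 * e2.Binf)) <|
  Matrix.fromCols ((e1.Binf * e1.A1) ⊗ₖ (1 : Matrix (Fin e2.ainf) (Fin e2.ainf) F2)) <|
  Matrix.fromCols
    ((e1.D0 * e1.Binf) ⊗ₖ (e2.B0 * e2.Ainf) + (e1.X1M * e1.Binf) ⊗ₖ (e2.B0 * e2.X1M))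
    ((e1.D0 * e1.Ainf) ⊗ₖ (e2.B0 * e2.Ainf) + (e1.X1M * e1.Ainf) ⊗ₖ (e2.B0 * e2.X1M))

def row5 (e1 e2 : SplicingDatum) : Matrix (Fin e1.a0 × Fin e2.ainf) (Src e1 e2) F2 :=
  Matrix.fromCols ((e1.Dinf * e1.B1) ⊗ₖ (e2.D1 * e2.A0)) <|
  Matrix.fromCols 0 <|
  Matrix.fromCols 0 <|
  Matrix.fromCols
    ((1 : Matrix (Fin e1.a0) (Fin e1.a0) F2) ⊗ₖ (1 : Matrix (Fin e2.ainf) (Fin e2.ainf) F2) +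
      (e1.Dinf * e1.A1) ⊗ₖ (e2.D1 * e2.A0)) <|
  Matrix.fromCols ((1 : Matrix (Fin e1.a0) (Fin e1.a0) F2) ⊗ₖ (e2.D1 * e2.B0)) 0

def row6 (e1 e2 : SplicingDatum) : Matrix (Fin e1.a1 × Fin e2.a1) (Src e1 e2) F2 :=
  Matrix.fromCols 0 <|
  Matrix.fromCols 0 <|
  Matrix.fromCols ((1 : Matrix (Fin e1.a1) (Fin e1.a1) F2) ⊗ₖ (e2.D0 * e2.Binf)) <|
  Matrix.fromCols 0 <|
  Matrix.fromCols
    ((e1.D0 * e1.Binf) ⊗ₖ (e2.D0 * e2.Ainf) + (e1.X1M * e1.Binf) ⊗ₖ (e2.D0 * e2.X1M))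
    ((1 : Matrix (Fin e1.a1) (Fin e1.a1) F2) ⊗ₖ (1 : Matrix (Fin e2.a1) (Fin e2.a1) F2) +
      (e1.D0 * e1.Ainf) ⊗ₖ (e2.D0 * e2.Ainf) + (e1.X1M * e1.Ainf) ⊗ₖ (e2.D0 * e2.X1M))

/-- The splicing map `D = D(K1, K2)` as a `6 × 6` block matrix. -/
def spliceD (e1 e2 : SplicingDatum) : Matrix (Tgt e1 e2) (Src e1 e2) F2 :=
  Matrix.fromRows (row1 e1 e2) <| Matrix.fromRows (row2 e1 e2) <|
  Matrix.fromRows (row3 e1 e2) <| Matrix.fromRows (row4 e1 e2) <|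
  Matrix.fromRows (row5 e1 e2) (row6 e1 e2)

end SplicingDatum

theorem kron_mulVec_tensVec {m n p q : Type*} [Fintype m] [Fintype n]
    (M : Matrix p m F2) (N : Matrix q n F2) (x : m → F2) (y : n → F2) :
    (M ⊗ₖ N).mulVec (tensVec x y) = tensVec (M.mulVec x) (N.mulVec y) := by
  ext ⟨i, j⟩
  simp only [Matrix.mulVec, dotProduct, tensVec, Fintype.sum_prod_type, Matrix.kroneckerMap_apply,
    Finset.sum_mul_sum]
  exact Finset.sum_congr rfl fun a _ => Finset.sum_congr rfl fun b _ => by ring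

/-- The common consequences of the block identities for a pair of vectors `x`, `y`. -/
theorem pair_facts {m n p : Type*} [Fintype m] [Fintype n] [Fintype p]
    [DecidableEq m] [DecidableEq n] [DecidableEq p]
    {A : Matrix m m F2} {B : Matrix m n F2} {C : Matrix n m F2} {C' : Matrix n m F2}
    {D : Matrix n n F2}
    (hinv : Matrix.fromBlocks A B C D * Matrix.fromBlocks A B C' D = 1)
    (hcomm : A * B + B * D = 0)
    {A' : Matrix n n F2} {B' : Matrix n p F2} {x : n → F2} {y : p → F2}
    (hx : B.mulVec x = 0) (hy : (D + A').mulVec x + B'.mulVec y = 0) :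
    B'.mulVec y = D.mulVec x + A'.mulVec x ∧ B.mulVec (D.mulVec x) = 0 ∧
      D.mulVec (D.mulVec x) = x := by
  refine ⟨?_, ?_, ?_⟩
  · rw [Matrix.add_mulVec] at hy
    funext i
    exact ((CharTwo.add_eq_zero).1 (congrFun hy i)).symm
  · have h := congrArg (fun M => M.mulVec x) hcomm
    simpa [Matrix.add_mulVec, ← Matrix.mulVec_mulVec, hx] using h
  · rw [Matrix.fromBlocks_multiply, ← Matrix.fromBlocks_one, Matrix.fromBlocks_inj] at hinv
    have h := congrArg (fun M => M.mulVec x) hinv.2.2.2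
    simpa [Matrix.add_mulVec, ← Matrix.mulVec_mulVec, hx] using h

open SplicingDatum in
/-- an explicit element of the kernel of the splicing map `D`. -/
theorem stmt4 (e1 e2 : SplicingDatum)
    (z0_1 : Fin e1.ainf → F2) (z1_1 : Fin e1.a0 → F2) (zinf_1 : Fin e1.a1 → F2)
    (z0_2 : Fin e2.ainf → F2) (z1_2 : Fin e2.a0 → F2) (zinf_2 : Fin e2.a1 → F2)
    (hz0_1 : e1.B1.mulVec z0_1 = 0) (hz1_1 : e1.Binf.mulVec z1_1 = 0)
    (hzinf_1 : e1.B0.mulVec zinf_1 = 0)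
    (hz0_2 : e2.B1.mulVec z0_2 = 0) (hz1_2 : e2.Binf.mulVec z1_2 = 0)
    (hzinf_2 : e2.B0.mulVec zinf_2 = 0)
    (xinf_1 : Fin e1.ainf → F2) (yinf_1 : Fin e1.a1 → F2)
    (xinf_2 : Fin e2.ainf → F2) (yinf_2 : Fin e2.a1 → F2)
    (hxinf_1 : e1.B1.mulVec xinf_1 = 0)
    (hyinf_1 : (e1.D1 + e1.A0).mulVec xinf_1 + e1.B0.mulVec yinf_1 = 0)
    (hxinf_2 : e2.B1.mulVec xinf_2 = 0)
    (hyinf_2 : (e2.D1 + e2.A0).mulVec xinf_2 + e2.B0.mulVec yinf_2 = 0)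
    (x1_1 : Fin e1.a1 → F2) (y1_1 : Fin e1.a0 → F2)
    (x1_2 : Fin e2.a1 → F2) (y1_2 : Fin e2.a0 → F2)
    (hx1_1 : e1.B0.mulVec x1_1 = 0)
    (hy1_1 : (e1.D0 + e1.Ainf).mulVec x1_1 + e1.Binf.mulVec y1_1 = 0)
    (hx1_2 : e2.B0.mulVec x1_2 = 0)
    (hy1_2 : (e2.D0 + e2.Ainf).mulVec x1_2 + e2.Binf.mulVec y1_2 = 0)
    (x0_1 : Fin e1.a0 → F2) (y0_1 : Fin e1.ainf → F2)
    (x0_2 : Fin e2.a0 → F2) (y0_2 : Fin e2.ainf → F2)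
    (hx0_1 : e1.Binf.mulVec x0_1 = 0)
    (hy0_1 : (e1.Dinf + e1.A1).mulVec x0_1 + e1.B1.mulVec y0_1 = 0)
    (hx0_2 : e2.Binf.mulVec x0_2 = 0)
    (hy0_2 : (e2.Dinf + e2.A1).mulVec x0_2 + e2.B1.mulVec y0_2 = 0) :
    (spliceD e1 e2).mulVec
      (Sum.elim (tensVec y0_1 xinf_2 + tensVec xinf_1 y0_2 + tensVec z0_1 z0_2)
      (Sum.elim (tensVec xinf_1 x0_2)
      (Sum.elim (tensVec yinf_1 x0_2 + tensVec x1_1 y1_2 + tensVec zinf_1 z1_2)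
      (Sum.elim (tensVec x0_1 xinf_2)
      (Sum.elim (tensVec y1_1 x1_2 + tensVec x0_1 yinf_2 + tensVec z1_1 zinf_2)
        (tensVec x1_1 x1_2)))))) = 0 := by
  obtain ⟨a1, a2, a3⟩ := pair_facts e1.inv1_left e1.comm1 hxinf_1 hyinf_1
  obtain ⟨b1, b2, b3⟩ := pair_facts e2.inv1_left e2.comm1 hxinf_2 hyinf_2
  obtain ⟨c1, c2, c3⟩ := pair_facts e1.inv0_left e1.comm0 hx1_1 hy1_1
  obtain ⟨d1, d2, d3⟩ := pair_facts e2.inv0_left e2.comm0 hx1_2 hy1_2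
  obtain ⟨f1, f2, f3⟩ := pair_facts e1.invinf_left e1.comminf hx0_1 hy0_1
  obtain ⟨g1, g2, g3⟩ := pair_facts e2.invinf_left e2.comminf hx0_2 hy0_2
  have two : (2 : F2) = 0 := rfl
  ext i
  rcases i with ⟨i, j⟩ | ⟨i, j⟩ | ⟨i, j⟩ | ⟨i, j⟩ | ⟨i, j⟩ | ⟨i, j⟩ <;>
  · simp only [spliceD, row1, row2, row3, row4, row5, row6, X1M, Matrix.fromRows_mulVec,
      Matrix.fromCols_mulVec, Sum.elim_inl, Sum.elim_inr, Sum.elim_comp_inl, Sum.elim_comp_inr,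
      Matrix.mulVec_add, Matrix.add_mulVec,
      kron_mulVec_tensVec, ← Matrix.mulVec_mulVec, Matrix.one_mulVec, Matrix.zero_mulVec,
      Matrix.mulVec_zero, hz0_1, hz1_1, hzinf_1, hz0_2, hz1_2, hzinf_2, hxinf_1, hxinf_2,
      hx1_1, hx1_2, hx0_1, hx0_2, a1, a2, a3, b1, b2, b3, c1, c2, c3, d1, d2, d3,
      f1, f2, f3, g1, g2, g3]
    simp only [Pi.add_apply, Pi.zero_apply, tensVec]
    ring_nf
    simp only [two, mul_zero, add_zero]
end

section
/- Let the notation be as in the context, with two splicing data (superscripts 1 and 2), the splicing map D, and the quantities k•^i and l•^i defined for each datum. Then dim ker(D) ≥ k0^1·k0^2 + kinf^1·k1^2 + k1^1·kinf^2 + linf^1·l0^2 + l0^1·linf^2 + l1^1·l1^2. -/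
set_option maxHeartbeats 1600000

open Matrix Module
open scoped Kronecker

theorem tens_kron {m n p q : Type*} [Fintype m] [Fintype n] (A : Matrix p m F2) (B : Matrix q n F2)
    (x : m → F2) (y : n → F2) :
    (A ⊗ₖ B) *ᵥ tensVec x y = tensVec (A *ᵥ x) (B *ᵥ y) := by
  ext ⟨i, j⟩
  simp only [tensVec, Matrix.mulVec, dotProduct, Matrix.kroneckerMap_apply, Fintype.sum_prod_type,
    Finset.sum_mul_sum]
  refine Finset.sum_congr rfl fun _ _ => Finset.sum_congr rfl fun _ _ => ?_
  ring

theorem tens_li {m n ι κ : Type*} [Fintype ι] [Fintype κ] {x : ι → m → F2} {y : κ → n → F2}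
    (hx : LinearIndependent F2 x) (hy : LinearIndependent F2 y) (c : ι × κ → F2)
    (h : ∀ p q, ∑ i, c i * tensVec (x i.1) (y i.2) (p, q) = 0) : ∀ i, c i = 0 := by
  rw [Fintype.linearIndependent_iff] at hx hy
  rintro ⟨i, j⟩
  refine hx (fun i => c (i, j)) ?_ i
  ext p
  have := hy (fun j => ∑ i, c (i, j) * x i p) (by
    ext q
    have := h p q
    simp only [tensVec, Fintype.sum_prod_type] at this
    rw [Finset.sum_comm] at this
    simp only [Finset.sum_apply, Pi.smul_apply, smul_eq_mul, Finset.sum_mul, Pi.zero_apply]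
    rw [← this]
    refine Finset.sum_congr rfl fun _ _ => Finset.sum_congr rfl fun _ _ => ?_
    ring) j
  simpa using this

section gen
set_option linter.unusedSectionVars false
variable {p q r : Type} [Fintype p] [Fintype q] [Fintype r] [DecidableEq p] [DecidableEq q]
  [DecidableEq r]

theorem exists_fam {V W : Type*} [AddCommGroup V] [Module F2 V] [AddCommGroup W] [Module F2 W]
    [FiniteDimensional F2 V]
    (P : V →ₗ[F2] W) (l : ℕ) (hl : l ≤ finrank F2 (LinearMap.range P)) :
    ∃ v : Fin l → V, LinearIndependent F2 (fun i => P (v i)) := by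
  let b := Module.finBasis F2 (LinearMap.range P)
  have hb : ∀ i, ∃ v, P v = b i := fun i => (b i).2
  choose v hv using hb
  refine ⟨fun i => v (Fin.castLE hl i), ?_⟩
  simp only [hv]
  have h1 : LinearIndependent F2 (fun i => (b i : W)) :=
    b.linearIndependent.map' (LinearMap.range P).subtype (Submodule.ker_subtype _)
  exact h1.comp _ (Fin.castLE_injective hl)

/-- restriction to the first block -/
def P1 : ((p ⊕ q) → F2) →ₗ[F2] (p → F2) := LinearMap.funLeft F2 F2 Sum.inl
/-- restriction to the second block -/
def P2 : ((p ⊕ q) → F2) →ₗ[F2] (q → F2) := LinearMap.funLeft F2 F2 Sum.inr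

variable (A0 : Matrix p p F2) (B0 : Matrix p q F2) (C0 : Matrix q p F2) (D0 : Matrix q q F2)
  (A1 : Matrix r r F2) (B1 : Matrix r p F2) (C1 C1' : Matrix p r F2) (D1 : Matrix p p F2)

/-- generic f -/
def gf : Matrix (r ⊕ p) (p ⊕ q) F2 := Matrix.fromBlocks 0 0 (1 : Matrix p p F2) 0
/-- generic fbar -/
def gfb : Matrix (r ⊕ p) (p ⊕ q) F2 :=
  Matrix.fromBlocks A1 B1 C1 D1 * (gf : Matrix (r ⊕ p) (p ⊕ q) F2) * Matrix.fromBlocks A0 B0 C0 D0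

theorem gf_apply (v : p ⊕ q → F2) :
    (gf : Matrix (r ⊕ p) (p ⊕ q) F2) *ᵥ v = Sum.elim (0 : r → F2) (P1 v) := by
  rw [gf, Matrix.fromBlocks_mulVec]
  simp [P1, LinearMap.funLeft]

theorem gfb_apply (v : p ⊕ q → F2) :
    gfb A0 B0 C0 D0 A1 B1 C1 D1 *ᵥ v =
      Sum.elim (B1 *ᵥ (A0 *ᵥ P1 v + B0 *ᵥ P2 v)) (D1 *ᵥ (A0 *ᵥ P1 v + B0 *ᵥ P2 v)) := by
  rw [gfb, ← Matrix.mulVec_mulVec, ← Matrix.mulVec_mulVec, gf_apply, Matrix.fromBlocks_mulVec,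
    Matrix.fromBlocks_mulVec]
  simp [P1, P2, LinearMap.funLeft]

theorem inj1 (h : Matrix.fromBlocks A1 B1 C1' D1 * Matrix.fromBlocks A1 B1 C1 D1 = 1)
    (y : p → F2) (h1 : B1 *ᵥ y = 0) (h2 : D1 *ᵥ y = 0) : y = 0 := by
  rw [← Matrix.fromBlocks_one, Matrix.fromBlocks_multiply, Matrix.fromBlocks_inj] at h
  have := congrArg (· *ᵥ y) h.2.2.2
  simpa [Matrix.add_mulVec, ← Matrix.mulVec_mulVec, h1, h2] using this.symm

theorem split_ext {v : p ⊕ q → F2} (h1 : P1 v = 0) (h2 : P2 v = 0) : v = 0 := by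
  ext (i | i)
  · exact congrFun h1 i
  · exact congrFun h2 i

theorem K_fam (h : Matrix.fromBlocks A1 B1 C1' D1 * Matrix.fromBlocks A1 B1 C1 D1 = 1) (k : ℕ)
    (hk : k = finrank F2 ↥(LinearMap.ker (gf : Matrix (r ⊕ p) (p ⊕ q) F2).mulVecLin ⊓
      LinearMap.ker (gfb A0 B0 C0 D0 A1 B1 C1 D1).mulVecLin)) :
    ∃ x : Fin k → q → F2, LinearIndependent F2 x ∧ ∀ i, B0 *ᵥ x i = 0 := by
  set K := LinearMap.ker (gf : Matrix (r ⊕ p) (p ⊕ q) F2).mulVecLin ⊓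
      LinearMap.ker (gfb A0 B0 C0 D0 A1 B1 C1 D1).mulVecLin with hK
  have key : ∀ v ∈ K, P1 v = 0 ∧ B0 *ᵥ P2 v = 0 := by
    rintro v ⟨h1, h2⟩
    simp only [LinearMap.mem_ker, Matrix.mulVecLin_apply, SetLike.mem_coe] at h1 h2
    rw [gf_apply] at h1
    rw [gfb_apply] at h2
    have e1 : P1 v = 0 := by
      ext i; exact congrFun h1 (Sum.inr i)
    refine ⟨e1, ?_⟩
    rw [e1] at h2
    simp only [Matrix.mulVec_zero, zero_add] at h2
    apply inj1 A1 B1 C1 C1' D1 h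
    · ext i; exact congrFun h2 (Sum.inl i)
    · ext i; exact congrFun h2 (Sum.inr i)
  have hinj : Function.Injective (P2.comp K.subtype) := by
    rw [injective_iff_map_eq_zero]
    rintro ⟨v, hv⟩ h0
    exact Subtype.ext (split_ext (key v hv).1 h0)
  obtain ⟨v, hv⟩ := exists_fam (P2.comp K.subtype) k (by
    rw [LinearMap.finrank_range_of_inj hinj, hk])
  exact ⟨_, hv, fun i => (key _ (v i).2).2⟩

theorem L_fam (h : Matrix.fromBlocks A1 B1 C1' D1 * Matrix.fromBlocks A1 B1 C1 D1 = 1)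
    (hc : A1 * B1 + B1 * D1 = 0) (l : ℕ)
    (hl : l = finrank F2 ↥(LinearMap.ker
        ((gf : Matrix (r ⊕ p) (p ⊕ q) F2) + gfb A0 B0 C0 D0 A1 B1 C1 D1).mulVecLin) -
      finrank F2 ↥(LinearMap.ker (gf : Matrix (r ⊕ p) (p ⊕ q) F2).mulVecLin ⊓
      LinearMap.ker (gfb A0 B0 C0 D0 A1 B1 C1 D1).mulVecLin)) :
    ∃ (x : Fin l → p → F2) (z : Fin l → q → F2), LinearIndependent F2 x ∧
      ∀ i, B1 *ᵥ x i = 0 ∧ A0 *ᵥ x i = D1 *ᵥ x i + B0 *ᵥ z i ∧ D1 *ᵥ (D1 *ᵥ x i) = x i ∧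
        B1 *ᵥ (D1 *ᵥ x i) = 0 := by
  set K := LinearMap.ker (gf : Matrix (r ⊕ p) (p ⊕ q) F2).mulVecLin ⊓
      LinearMap.ker (gfb A0 B0 C0 D0 A1 B1 C1 D1).mulVecLin with hK
  set S := LinearMap.ker
        ((gf : Matrix (r ⊕ p) (p ⊕ q) F2) + gfb A0 B0 C0 D0 A1 B1 C1 D1).mulVecLin with hS
  have key : ∀ v ∈ S, B1 *ᵥ (A0 *ᵥ P1 v + B0 *ᵥ P2 v) = 0 ∧
      P1 v = D1 *ᵥ (A0 *ᵥ P1 v + B0 *ᵥ P2 v) := by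
    intro v hv
    simp only [hS, LinearMap.mem_ker, Matrix.mulVecLin_apply] at hv
    rw [Matrix.add_mulVec, gf_apply, gfb_apply] at hv
    constructor
    · ext i; simpa using congrFun hv (Sum.inl i)
    · ext i
      have := congrFun hv (Sum.inr i)
      simp only [Pi.add_apply, Sum.elim_inr, Pi.zero_apply] at this
      exact CharTwo.add_eq_zero.mp this
  have hker : finrank F2 (LinearMap.ker (P1.comp S.subtype)) ≤ finrank F2 K := by
    have hm : ∀ w : LinearMap.ker (P1.comp S.subtype), (w : S).1 ∈ K := by
      rintro ⟨⟨v, hv⟩, hw⟩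
      have hw' : P1 v = 0 := hw
      have := key v hv
      rw [hw'] at this
      simp only [hK, Submodule.mem_inf, LinearMap.mem_ker, Matrix.mulVecLin_apply, gf_apply,
        gfb_apply, hw']
      rw [this.1, ← this.2]
      constructor <;> (ext (i | i) <;> rfl)
    let g : LinearMap.ker (P1.comp S.subtype) →ₗ[F2] K :=
      LinearMap.codRestrict K (S.subtype.comp (Submodule.subtype _)) hm
    refine LinearMap.finrank_le_finrank_of_injective (f := g) ?_
    intro a b hab
    have : (a : S).1 = (b : S).1 := congrArg (fun t : K => t.1) hab
    exact Subtype.ext (Subtype.ext this)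
  have hrn := LinearMap.finrank_range_add_finrank_ker (P1.comp S.subtype)
  obtain ⟨v, hv⟩ := exists_fam (P1.comp S.subtype) l (by omega)
  refine ⟨_, fun i => P2 (v i).1, hv, fun i => ?_⟩
  obtain ⟨k1, k2⟩ := key _ (v i).2
  simp only [LinearMap.comp_apply, Submodule.subtype_apply]
  generalize P1 (v i).1 = x at *
  generalize P2 (v i).1 = z at *
  have hc' : ∀ y, A1 *ᵥ (B1 *ᵥ y) = B1 *ᵥ (D1 *ᵥ y) := by
    intro y
    have := congrArg (· *ᵥ y) hc
    simp only [Matrix.add_mulVec, ← Matrix.mulVec_mulVec, Matrix.zero_mulVec] at this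
    ext j
    exact CharTwo.add_eq_zero.mp (congrFun this j)
  rw [← Matrix.fromBlocks_one, Matrix.fromBlocks_multiply, Matrix.fromBlocks_inj] at h
  have hD : ∀ y, B1 *ᵥ y = 0 → D1 *ᵥ (D1 *ᵥ y) = y := by
    intro y hy
    have := congrArg (· *ᵥ y) h.2.2.2
    simpa [Matrix.add_mulVec, ← Matrix.mulVec_mulVec, hy] using this
  have h1 : B1 *ᵥ x = 0 := by rw [k2, ← hc', k1, Matrix.mulVec_zero]
  refine ⟨h1, ?_, hD x h1, ?_⟩
  · have := hD _ k1
    rw [← k2] at this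
    rw [this, add_assoc]
    ext j
    simp [CharTwo.add_self_eq_zero]
  · rw [← hc', h1, Matrix.mulVec_zero]

end gen

/-- six-component source vector -/
def vec6 {e1 e2 : SplicingDatum} (u1 : Fin e1.ainf × Fin e2.ainf → F2)
    (u2 : Fin e1.ainf × Fin e2.a0 → F2) (u3 : Fin e1.a1 × Fin e2.a0 → F2)
    (u4 : Fin e1.a0 × Fin e2.ainf → F2) (u5 : Fin e1.a0 × Fin e2.a1 → F2)
    (u6 : Fin e1.a1 × Fin e2.a1 → F2) : SplicingDatum.Src e1 e2 → F2 :=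
  Sum.elim u1 <| Sum.elim u2 <| Sum.elim u3 <| Sum.elim u4 <| Sum.elim u5 u6

open SplicingDatum in
theorem mem_ker6 {e1 e2 : SplicingDatum} (v : Src e1 e2 → F2)
    (h1 : row1 e1 e2 *ᵥ v = 0) (h2 : row2 e1 e2 *ᵥ v = 0) (h3 : row3 e1 e2 *ᵥ v = 0)
    (h4 : row4 e1 e2 *ᵥ v = 0) (h5 : row5 e1 e2 *ᵥ v = 0) (h6 : row6 e1 e2 *ᵥ v = 0) :
    v ∈ LinearMap.ker (spliceD e1 e2).mulVecLin := by
  rw [LinearMap.mem_ker, Matrix.mulVecLin_apply]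
  simp only [spliceD, Matrix.fromRows_mulVec, h1, h2, h3, h4, h5, h6]
  ext (i | i | i | i | i | i) <;> rfl

theorem tens_zero_left {m n : Type*} (y : n → F2) : tensVec (0 : m → F2) y = 0 := by
  ext; simp [tensVec]
theorem tens_zero_right {m n : Type*} (y : n → F2) : tensVec y (0 : m → F2) = 0 := by
  ext; simp [tensVec]
theorem tens_add_left {m n : Type*} (x x' : m → F2) (y : n → F2) :
    tensVec (x + x') y = tensVec x y + tensVec x' y := by
  ext; simp [tensVec, add_mul]
theorem tens_add_right {m n : Type*} (x : m → F2) (y y' : n → F2) :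
    tensVec x (y + y') = tensVec x y + tensVec x y' := by
  ext; simp [tensVec, mul_add]
theorem f2_add_self {m : Type*} (x : m → F2) : x + x = 0 := by
  ext; simp [CharTwo.add_self_eq_zero]

open SplicingDatum in
theorem stmt5 (e1 e2 : SplicingDatum) :
    kdim (spliceD e1 e2) ≥
      e1.k0 * e2.k0 + e1.kinf * e2.k1 + e1.k1 * e2.kinf +
        e1.linf * e2.l0 + e1.l0 * e2.linf + e1.l1 * e2.l1 := by
  have Kinf : ∀ e : SplicingDatum, ∃ x : Fin e.kinf → Fin e.a1 → F2,
      LinearIndependent F2 x ∧ ∀ i, e.B0 *ᵥ x i = 0 := fun e =>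
    K_fam e.A0 e.B0 e.C0 e.D0 e.A1 e.B1 e.C1inv e.C1 e.D1 e.inv1_left _ rfl
  have K0 : ∀ e : SplicingDatum, ∃ x : Fin e.k0 → Fin e.ainf → F2,
      LinearIndependent F2 x ∧ ∀ i, e.B1 *ᵥ x i = 0 := fun e =>
    K_fam e.A1 e.B1 e.C1 e.D1 e.Ainf e.Binf e.Cinfinv e.Cinf e.Dinf e.invinf_left _ rfl
  have K1 : ∀ e : SplicingDatum, ∃ x : Fin e.k1 → Fin e.a0 → F2,
      LinearIndependent F2 x ∧ ∀ i, e.Binf *ᵥ x i = 0 := fun e =>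
    K_fam e.Ainf e.Binf e.Cinf e.Dinf e.A0 e.B0 e.C0inv e.C0 e.D0 e.inv0_left _ rfl
  have Linf := fun e : SplicingDatum =>
    L_fam e.A0 e.B0 e.C0 e.D0 e.A1 e.B1 e.C1inv e.C1 e.D1 e.inv1_left e.comm1 e.linf rfl
  have L0 := fun e : SplicingDatum =>
    L_fam e.A1 e.B1 e.C1 e.D1 e.Ainf e.Binf e.Cinfinv e.Cinf e.Dinf e.invinf_left e.comminf
      e.l0 rfl
  have L1 := fun e : SplicingDatum =>
    L_fam e.Ainf e.Binf e.Cinf e.Dinf e.A0 e.B0 e.C0inv e.C0 e.D0 e.inv0_left e.comm0 e.l1 rfl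
  obtain ⟨p0, ip0, hp0⟩ := K0 e1
  obtain ⟨q0, iq0, hq0⟩ := K0 e2
  obtain ⟨p1, ip1, hp1⟩ := K1 e1
  obtain ⟨q1, iq1, hq1⟩ := K1 e2
  obtain ⟨pi, ipi, hpi⟩ := Kinf e1
  obtain ⟨qi, iqi, hqi⟩ := Kinf e2
  obtain ⟨x0, w0, ix0, hx0⟩ := L0 e1
  obtain ⟨y0, v0, iy0, hy0⟩ := L0 e2
  obtain ⟨x1, w1, ix1, hx1⟩ := L1 e1
  obtain ⟨y1, v1, iy1, hy1⟩ := L1 e2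
  obtain ⟨xi, wi, ixi, hxi⟩ := Linf e1
  obtain ⟨yi, vi, iyi, hyi⟩ := Linf e2
  clear Kinf K0 K1 Linf L0 L1
  let ι := (Fin e1.k0 × Fin e2.k0) ⊕ (Fin e1.kinf × Fin e2.k1) ⊕ (Fin e1.k1 × Fin e2.kinf) ⊕
    (Fin e1.linf × Fin e2.l0) ⊕ (Fin e1.l0 × Fin e2.linf) ⊕ (Fin e1.l1 × Fin e2.l1)
  let V : ι → Src e1 e2 → F2 :=
    Sum.elim (fun i => vec6 (tensVec (p0 i.1) (q0 i.2)) 0 0 0 0 0) <|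
    Sum.elim (fun i => vec6 0 0 (tensVec (pi i.1) (q1 i.2)) 0 0 0) <|
    Sum.elim (fun i => vec6 0 0 0 0 (tensVec (p1 i.1) (qi i.2)) 0) <|
    Sum.elim (fun i => vec6 (tensVec (xi i.1) (v0 i.2)) (tensVec (xi i.1) (y0 i.2))
      (tensVec (wi i.1) (y0 i.2)) 0 0 0) <|
    Sum.elim (fun i => vec6 (tensVec (w0 i.1) (yi i.2)) 0 0 (tensVec (x0 i.1) (yi i.2))
      (tensVec (x0 i.1) (vi i.2)) 0) <|
    (fun i => vec6 0 0 (tensVec (x1 i.1) (v1 i.2)) 0 (tensVec (w1 i.1) (y1 i.2))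
      (tensVec (x1 i.1) (y1 i.2)))
  have two0 : (2 : F2) = 0 := rfl
  have hV : ∀ i, V i ∈ LinearMap.ker (spliceD e1 e2).mulVecLin := by
    rintro (⟨i, j⟩ | ⟨i, j⟩ | ⟨i, j⟩ | ⟨i, j⟩ | ⟨i, j⟩ | ⟨i, j⟩) <;>
    apply mem_ker6 <;>
    simp only [V, vec6, row1, row2, row3, row4, row5, row6, X1M, Sum.elim_inl, Sum.elim_inr,
      Matrix.fromCols_mulVec_sumElim, Matrix.add_mulVec, tens_kron, ← Matrix.mulVec_mulVec,
      Matrix.one_mulVec, Matrix.zero_mulVec, hp0, hq0, hp1, hq1, hpi, hqi, hx0, hy0, hx1, hy1,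
      hxi, hyi, Matrix.mulVec_zero, Matrix.mulVec_add, tens_zero_left, tens_zero_right, zero_add,
      add_zero, tens_add_left, tens_add_right, f2_add_self]
    all_goals (ext s; simp only [Pi.add_apply, Pi.zero_apply]; ring_nf; simp only [two0, mul_zero, add_zero])
  have hLI : LinearIndependent F2 V := by
    rw [Fintype.linearIndependent_iff]
    intro c hc
    have hc' : ∀ s, ∑ i, c i * V i s = 0 := by
      intro s
      simpa using congrFun hc s
    simp only [ι, Fintype.sum_sum_type, V, Sum.elim_inl, Sum.elim_inr] at hc'
    have c4 := tens_li ixi iy0 (fun i => c (.inr (.inr (.inr (.inl i))))) (fun a b => by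
      simpa [vec6] using hc' (.inr (.inl (a, b))))
    have c5 := tens_li ix0 iyi (fun i => c (.inr (.inr (.inr (.inr (.inl i)))))) (fun a b => by
      simpa [vec6] using hc' (.inr (.inr (.inr (.inl (a, b))))))
    have c6 := tens_li ix1 iy1 (fun i => c (.inr (.inr (.inr (.inr (.inr i)))))) (fun a b => by
      simpa [vec6] using hc' (.inr (.inr (.inr (.inr (.inr (a, b)))))))
    have c1 := tens_li ip0 iq0 (fun i => c (.inl i)) (fun a b => by
      simpa only [vec6, c4, c5, c6, zero_mul, Finset.sum_const_zero, add_zero, Sum.elim_inl,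
        Sum.elim_inr, zero_add, mul_zero, Pi.zero_apply] using hc' (.inl (a, b)))
    have c2 := tens_li ipi iq1 (fun i => c (.inr (.inl i))) (fun a b => by
      simpa only [vec6, c4, c5, c6, zero_mul, Finset.sum_const_zero, add_zero, Sum.elim_inl,
        Sum.elim_inr, zero_add, mul_zero, Pi.zero_apply] using hc' (.inr (.inr (.inl (a, b)))))
    have c3 := tens_li ip1 iqi (fun i => c (.inr (.inr (.inl i)))) (fun a b => by
      simpa only [vec6, c4, c5, c6, zero_mul, Finset.sum_const_zero, add_zero, Sum.elim_inl,
        Sum.elim_inr, zero_add, mul_zero, Pi.zero_apply] using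
          hc' (.inr (.inr (.inr (.inr (.inl (a, b)))))))
    rintro (i | i | i | i | i | i)
    exacts [c1 i, c2 i, c3 i, c4 i, c5 i, c6 i]
  have hLI' : LinearIndependent F2
      (fun i => (⟨V i, hV i⟩ : LinearMap.ker (spliceD e1 e2).mulVecLin)) :=
    LinearIndependent.of_comp (Submodule.subtype _) hLI
  have := hLI'.fintype_card_le_finrank
  simp only [ι, Fintype.card_sum, Fintype.card_prod, Fintype.card_fin] at this
  unfold kdim
  omega
end

section
/- Let the notation be as in the context, with two splicing data (superscripts 1 and 2), the splicing map D, and the quantities c•^i and d•^i defined for each datum. Then dim coker(D) ≥ cinf^1·cinf^2 + c0^1·c1^2 + c1^1·c0^2 + dinf^1·d0^2 + d0^1·dinf^2 + d1^1·d1^2. -/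
set_option maxHeartbeats 1600000

open Matrix Module
open scoped Kronecker

set_option linter.all false
set_option linter.unusedSimpArgs false
set_option linter.unusedTactic false
set_option linter.unreachableTactic false

theorem aux_cdim_ge {m n k : Type*} [Fintype m] [Fintype n] [Fintype k]
    (D : Matrix m n F2) (L : Matrix k m F2) (hLD : L * D = 0)
    (hs : Function.Surjective L.mulVecLin) : Fintype.card k ≤ cdim D := by
  unfold cdim
  have hle : LinearMap.range D.mulVecLin ≤ LinearMap.ker L.mulVecLin := by
    rintro _ ⟨x, rfl⟩
    simp [Matrix.mulVec_mulVec, hLD]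
  have h2 : Function.Surjective ((LinearMap.range D.mulVecLin).liftQ L.mulVecLin hle) := by
    intro y
    obtain ⟨x, hx⟩ := hs y
    exact ⟨Submodule.Quotient.mk x, by simpa using hx⟩
  have := LinearMap.finrank_le_finrank_of_surjective h2
  simpa using this

theorem aux_right_inv {k m : Type*} [Fintype k] [Fintype m] [DecidableEq k] [DecidableEq m]
    (Q : Matrix k m F2) (h : ∀ t : k → F2, t ᵥ* Q = 0 → t = 0) :
    ∃ R : Matrix m k F2, Q * R = 1 := by
  obtain ⟨g, hg⟩ := LinearMap.exists_leftInverse_of_injective Q.vecMulLinear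
    (by rw [LinearMap.ker_eq_bot']; exact fun t ht => h t (by simpa using ht))
  refine ⟨LinearMap.toMatrixRight' g, ?_⟩
  have h3 : ∀ v : k → F2, v ᵥ* (Q * LinearMap.toMatrixRight' g) = v ᵥ* 1 := by
    intro v
    have h1 := LinearMap.congr_fun hg v
    have h4 : Matrix.toLinearMapRight' (LinearMap.toMatrixRight' g) (v ᵥ* Q) = g (v ᵥ* Q) := by
      simp
    rw [← Matrix.vecMul_vecMul, Matrix.vecMul_one]
    exact h4.trans h1
  ext i j
  have := congrFun (h3 (Pi.single i 1)) j
  rwa [Matrix.single_one_vecMul, Matrix.single_one_vecMul] at this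

/-- A family of functionals on `V` vanishing on `W` and independent on `V`. -/
theorem aux_functionals {m : Type*} [Fintype m] [DecidableEq m] (V W : Submodule F2 (m → F2))
    (hWV : W ≤ V) :
    ∃ L : Matrix (Fin (finrank F2 V - finrank F2 W)) m F2,
      (∀ w ∈ W, L *ᵥ w = 0) ∧ ∀ t, (∀ v ∈ V, (t ᵥ* L) ⬝ᵥ v = 0) → t = 0 := by
  have hk : finrank F2 (V ⧸ W.submoduleOf V) = finrank F2 V - finrank F2 W := by
    have h1 := Submodule.finrank_quotient_add_finrank (W.submoduleOf V)
    have h2 : finrank F2 (W.submoduleOf V) = finrank F2 W :=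
      (Submodule.submoduleOfEquivOfLe hWV).finrank_eq
    omega
  have e : (V ⧸ W.submoduleOf V) ≃ₗ[F2] (Fin (finrank F2 V - finrank F2 W) → F2) :=
    LinearEquiv.ofFinrankEq _ _ (by simpa using hk)
  obtain ⟨g, hg⟩ := LinearMap.exists_extend (e.toLinearMap ∘ₗ (W.submoduleOf V).mkQ)
  have hg' : ∀ v (hv : v ∈ V), g v = e (Submodule.Quotient.mk ⟨v, hv⟩) := fun v hv => by
    have := LinearMap.congr_fun hg ⟨v, hv⟩
    simpa using this
  have hL : ∀ v, LinearMap.toMatrix' g *ᵥ v = g v := fun v => LinearMap.toMatrix'_mulVec g v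
  refine ⟨LinearMap.toMatrix' g, ?_, ?_⟩
  · intro w hw
    rw [hL, hg' w (hWV hw)]
    have : (Submodule.Quotient.mk ⟨w, hWV hw⟩ : V ⧸ W.submoduleOf V) = 0 := by
      rw [Submodule.Quotient.mk_eq_zero]
      exact hw
    rw [this, map_zero]
  · intro t ht
    ext i
    obtain ⟨x, hx⟩ := e.surjective (Pi.single i 1)
    obtain ⟨⟨v, hv⟩, rfl⟩ := Submodule.Quotient.mk_surjective _ x
    have := ht v hv
    rw [← Matrix.dotProduct_mulVec, hL, hg' v hv, hx] at this
    simpa using this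

section generic
variable {a b c : Type} [Fintype a] [Fintype b] [Fintype c] [DecidableEq a] [DecidableEq b]
  [DecidableEq c]

theorem aux_mul_eq_zero_of_mulVec {k : Type*} {n : Type} [Fintype n] [DecidableEq n]
    (M : Matrix k n F2) (h : ∀ v, M *ᵥ v = 0) : M = 0 := by
  ext i j
  have := congrFun (h (Pi.single j 1)) i
  simpa using this

/-- data for the `c` quantities -/
theorem aux_c (A0 : Matrix a a F2) (B0 : Matrix a b F2) (C0 : Matrix b a F2)
    (D0 : Matrix b b F2) (C0i : Matrix b a F2) (B1 : Matrix c a F2) (D1 : Matrix a a F2)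
    (hl : Matrix.fromBlocks A0 B0 C0 D0 * Matrix.fromBlocks A0 B0 C0i D0 = 1)
    (f fb : Matrix (c ⊕ a) (a ⊕ b) F2)
    (hf : f = Matrix.fromBlocks 0 0 1 0)
    (hfb : fb = Matrix.fromBlocks (B1 * A0) (B1 * B0) (D1 * A0) (D1 * B0))
    (k : ℕ) (hk : k = finrank F2 ((c ⊕ a → F2) ⧸
        (LinearMap.range f.mulVecLin ⊔ LinearMap.range fb.mulVecLin))) :
    ∃ (U : Matrix (Fin k) c F2) (R : Matrix c (Fin k) F2), U * R = 1 ∧ U * B1 = 0 := by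
  have hdim : finrank F2 ((c ⊕ a → F2) ⧸
        (LinearMap.range f.mulVecLin ⊔ LinearMap.range fb.mulVecLin)) =
      finrank F2 (⊤ : Submodule F2 (c ⊕ a → F2)) - finrank F2
        ↥(LinearMap.range f.mulVecLin ⊔ LinearMap.range fb.mulVecLin) := by
    rw [Submodule.finrank_quotient, finrank_top]
  rw [hdim] at hk
  obtain ⟨L, hL1, hL2⟩ := aux_functionals ⊤
    (LinearMap.range f.mulVecLin ⊔ LinearMap.range fb.mulVecLin) le_top
  generalize finrank F2 (⊤ : Submodule F2 (c ⊕ a → F2)) - finrank F2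
        ↥(LinearMap.range f.mulVecLin ⊔ LinearMap.range fb.mulVecLin) = k' at *
  subst hk
  have h1 : L * f = 0 := aux_mul_eq_zero_of_mulVec _ fun v => by
    rw [← Matrix.mulVec_mulVec]
    exact hL1 _ (Submodule.mem_sup_left ⟨v, rfl⟩)
  have h2 : L * fb = 0 := aux_mul_eq_zero_of_mulVec _ fun v => by
    rw [← Matrix.mulVec_mulVec]
    exact hL1 _ (Submodule.mem_sup_right ⟨v, rfl⟩)
  obtain ⟨P, Q, rfl⟩ : ∃ P Q, L = Matrix.fromCols P Q :=
    ⟨L.toCols₁, L.toCols₂, by simp⟩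
  rw [hf, Matrix.fromCols_mul_fromBlocks] at h1
  rw [hfb, Matrix.fromCols_mul_fromBlocks] at h2
  have hQ : Q = 0 := by
    have := congrArg Matrix.toCols₁ h1
    simp only [Matrix.toCols₁_fromCols] at this
    simpa using this.trans (rfl : _ = (0 : Matrix _ _ F2))
  subst hQ
  have e1 : P * B1 * A0 = 0 := by
    have := congrArg Matrix.toCols₁ h2
    simp only [Matrix.toCols₁_fromCols] at this
    simpa [Matrix.mul_assoc] using this.trans (rfl : _ = (0 : Matrix _ _ F2))
  have e2 : P * B1 * B0 = 0 := by
    have := congrArg Matrix.toCols₂ h2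
    simp only [Matrix.toCols₂_fromCols] at this
    simpa [Matrix.mul_assoc] using this.trans (rfl : _ = (0 : Matrix _ _ F2))
  rw [Matrix.fromBlocks_multiply, ← Matrix.fromBlocks_one, Matrix.fromBlocks_inj] at hl
  have e3 : P * B1 = 0 := by
    calc P * B1 = P * B1 * (A0 * A0 + B0 * C0i) := by rw [hl.1, Matrix.mul_one]
      _ = P * B1 * A0 * A0 + P * B1 * B0 * C0i := by simp only [Matrix.mul_add, Matrix.mul_assoc]
      _ = 0 := by rw [e1, e2]; simp
  obtain ⟨R, hR⟩ := aux_right_inv P (fun t ht => hL2 t (fun v _ => by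
    simp [Matrix.vecMul_fromCols, ht]))
  exact ⟨P, R, hR, e3⟩

/-- data for the `d` quantities -/
theorem aux_d (A0 : Matrix a a F2) (B0 : Matrix a b F2) (C0 : Matrix b a F2)
    (D0 : Matrix b b F2) (C0i : Matrix b a F2) (B1 : Matrix c a F2) (D1 : Matrix a a F2)
    (hl : Matrix.fromBlocks A0 B0 C0 D0 * Matrix.fromBlocks A0 B0 C0i D0 = 1)
    (f fb : Matrix (c ⊕ a) (a ⊕ b) F2)
    (hf : f = Matrix.fromBlocks 0 0 1 0)
    (hfb : fb = Matrix.fromBlocks (B1 * A0) (B1 * B0) (D1 * A0) (D1 * B0))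
    (k : ℕ) (hk : k =
        finrank F2 ↥(LinearMap.range f.mulVecLin ⊔ LinearMap.range fb.mulVecLin) -
        finrank F2 ↥(LinearMap.range (f + fb).mulVecLin)) :
    ∃ (P : Matrix (Fin k) c F2) (Q : Matrix (Fin k) a F2) (R : Matrix a (Fin k) F2), Q * R = 1 ∧ Q * B0 = 0 ∧
        Q * D1 * A0 = Q + P * B1 * A0 ∧ Q * D1 * B0 = P * B1 * B0 := by
  obtain ⟨L, hL1, hL2⟩ := aux_functionals
    (LinearMap.range f.mulVecLin ⊔ LinearMap.range fb.mulVecLin)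
    (LinearMap.range (f + fb).mulVecLin) (by
      rintro _ ⟨v, rfl⟩
      simp only [Matrix.mulVecLin_apply, Matrix.add_mulVec]
      exact Submodule.add_mem_sup ⟨v, rfl⟩ ⟨v, rfl⟩)
  generalize finrank F2 ↥(LinearMap.range f.mulVecLin ⊔ LinearMap.range fb.mulVecLin) -
        finrank F2 ↥(LinearMap.range (f + fb).mulVecLin) = k' at *
  subst hk
  have h1 : L * (f + fb) = 0 := aux_mul_eq_zero_of_mulVec _ fun v => by
    rw [← Matrix.mulVec_mulVec]
    exact hL1 _ ⟨v, rfl⟩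
  obtain ⟨P, Q, rfl⟩ : ∃ P Q, L = Matrix.fromCols P Q :=
    ⟨L.toCols₁, L.toCols₂, by simp⟩
  rw [hf, hfb, Matrix.fromBlocks_add, Matrix.fromCols_mul_fromBlocks] at h1
  have neg_self : ∀ {m n : Type _} (M : Matrix m n F2), -M = M := by
    intro m n M; ext i j; exact ZMod.neg_eq_self_mod_two _
  have add_zero_iff : ∀ {m n : Type _} (M N : Matrix m n F2), M + N = 0 → M = N := by
    intro m n M N h
    rw [← neg_self N]; exact eq_neg_of_add_eq_zero_left h
  have e1 : P * B1 * A0 + Q * D1 * A0 = Q := by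
    have := congrArg Matrix.toCols₁ h1
    simp only [Matrix.toCols₁_fromCols] at this
    apply add_zero_iff
    rw [show (0 : Matrix (Fin k) a F2) = Matrix.toCols₁ (0 : Matrix (Fin k) (a ⊕ b) F2) from rfl,
      ← this]
    simp only [Matrix.mul_add, Matrix.mul_assoc, zero_add, Matrix.mul_one]
    abel
  have e2 : P * B1 * B0 + Q * D1 * B0 = 0 := by
    have := congrArg Matrix.toCols₂ h1
    simp only [Matrix.toCols₂_fromCols] at this
    rw [show (0 : Matrix (Fin k) b F2) = Matrix.toCols₂ (0 : Matrix (Fin k) (a ⊕ b) F2) from rfl,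
      ← this]
    simp only [Matrix.mul_assoc, zero_add]
  rw [Matrix.fromBlocks_multiply, ← Matrix.fromBlocks_one, Matrix.fromBlocks_inj] at hl
  have e3 : P * B1 + Q * D1 = Q * A0 := by
    calc P * B1 + Q * D1 = (P * B1 + Q * D1) * (A0 * A0 + B0 * C0i) := by
          rw [hl.1, Matrix.mul_one]
      _ = (P * B1 * A0 + Q * D1 * A0) * A0 + (P * B1 * B0 + Q * D1 * B0) * C0i := by
          simp only [Matrix.mul_add, Matrix.add_mul, Matrix.mul_assoc]
      _ = Q * A0 := by rw [e1, e2]; simp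
  have e4 : Q * B0 = 0 := by
    calc Q * B0 = (P * B1 * A0 + Q * D1 * A0) * B0 + (P * B1 * B0 + Q * D1 * B0) * D0 := by
          rw [e1, e2]; simp
      _ = (P * B1 + Q * D1) * (A0 * B0 + B0 * D0) := by
          simp only [Matrix.mul_add, Matrix.add_mul, Matrix.mul_assoc]
      _ = 0 := by rw [hl.2.1, Matrix.mul_zero]
  obtain ⟨R, hR⟩ := aux_right_inv Q (fun t ht => hL2 t (fun v hv => by
    have hB : (t ᵥ* P) ᵥ* B1 = 0 := by
      have := congrArg (fun M => t ᵥ* M) e3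
      simpa [Matrix.vecMul_add, ← Matrix.vecMul_vecMul, ht] using this
    have hkf : (t ᵥ* Matrix.fromCols P Q) ᵥ* f = 0 := by
      rw [hf, Matrix.vecMul_fromCols, ht, Matrix.vecMul_fromBlocks]
      ext (i | i) <;> simp
    have hkfb : (t ᵥ* Matrix.fromCols P Q) ᵥ* fb = 0 := by
      rw [hfb, Matrix.vecMul_fromCols, ht, Matrix.vecMul_fromBlocks]
      ext (i | i) <;> simp [← Matrix.vecMul_vecMul, hB]
    obtain ⟨_, ⟨x, rfl⟩, _, ⟨y, rfl⟩, rfl⟩ := Submodule.mem_sup.1 hv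
    rw [dotProduct_add, Matrix.mulVecLin_apply, Matrix.mulVecLin_apply, Matrix.dotProduct_mulVec,
      Matrix.dotProduct_mulVec, hkf, hkfb]
    simp))
  refine ⟨P, Q, R, hR, e4, ?_, ?_⟩
  · have : Q + P * B1 * A0 = -(P * B1 * A0) + Q := by rw [neg_self, add_comm]
    rw [this]
    conv_rhs => rw [← e1]
    abel
  · exact (add_zero_iff _ _ e2).symm

end generic

theorem aux_fromCols_add {m n1 n2 : Type*} (A C : Matrix m n1 F2) (B D : Matrix m n2 F2) :
    Matrix.fromCols A B + Matrix.fromCols C D = Matrix.fromCols (A + C) (B + D) := by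
  ext i (j | j) <;> simp

theorem aux_fromCols_eq_zero {m n1 n2 : Type*} (A : Matrix m n1 F2) (B : Matrix m n2 F2)
    (hA : A = 0) (hB : B = 0) : Matrix.fromCols A B = 0 := by
  subst hA hB; simp

theorem aux_two {m n : Type*} (M : Matrix m n F2) : (2 : ℕ) • M = 0 := by
  rw [two_smul]; ext i j; exact CharTwo.add_self_eq_zero _

theorem aux_two' {m n : Type*} (M : Matrix m n F2) : (2 : ℤ) • M = 0 := by
  rw [two_smul]; ext i j; exact CharTwo.add_self_eq_zero _

namespace SplicingDatum

/-- A block row indexed by the six summands of the target. -/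
def sixCols {k : Type} (e1 e2 : SplicingDatum)
    (φ1 : Matrix k (Fin e1.a0 × Fin e2.a0) F2) (φ2 : Matrix k (Fin e1.ainf × Fin e2.a1) F2)
    (φ3 : Matrix k (Fin e1.ainf × Fin e2.a0) F2) (φ4 : Matrix k (Fin e1.a1 × Fin e2.ainf) F2)
    (φ5 : Matrix k (Fin e1.a0 × Fin e2.ainf) F2) (φ6 : Matrix k (Fin e1.a1 × Fin e2.a1) F2) :
    Matrix k (Tgt e1 e2) F2 :=
  Matrix.fromCols φ1 (Matrix.fromCols φ2 (Matrix.fromCols φ3 (Matrix.fromCols φ4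
      (Matrix.fromCols φ5 φ6))))

theorem sixCols_mulVec {k : Type} (e1 e2 : SplicingDatum)
    (φ1 : Matrix k (Fin e1.a0 × Fin e2.a0) F2) (φ2 : Matrix k (Fin e1.ainf × Fin e2.a1) F2)
    (φ3 : Matrix k (Fin e1.ainf × Fin e2.a0) F2) (φ4 : Matrix k (Fin e1.a1 × Fin e2.ainf) F2)
    (φ5 : Matrix k (Fin e1.a0 × Fin e2.ainf) F2) (φ6 : Matrix k (Fin e1.a1 × Fin e2.a1) F2)
    (x1 x2 x3 x4 x5 x6) :
    sixCols e1 e2 φ1 φ2 φ3 φ4 φ5 φ6 *ᵥ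
      (Sum.elim x1 (Sum.elim x2 (Sum.elim x3 (Sum.elim x4 (Sum.elim x5 x6))))) =
    φ1 *ᵥ x1 + (φ2 *ᵥ x2 + (φ3 *ᵥ x3 + (φ4 *ᵥ x4 + (φ5 *ᵥ x5 + φ6 *ᵥ x6)))) := by
  simp only [sixCols, Matrix.fromCols_mulVec_sumElim]

/-- The combination of the six block rows of `spliceD` with given coefficient blocks. -/
theorem aux_rows {k : Type} [Fintype k] (e1 e2 : SplicingDatum)
    (φ1 : Matrix k (Fin e1.a0 × Fin e2.a0) F2) (φ2 : Matrix k (Fin e1.ainf × Fin e2.a1) F2)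
    (φ3 : Matrix k (Fin e1.ainf × Fin e2.a0) F2) (φ4 : Matrix k (Fin e1.a1 × Fin e2.ainf) F2)
    (φ5 : Matrix k (Fin e1.a0 × Fin e2.ainf) F2) (φ6 : Matrix k (Fin e1.a1 × Fin e2.a1) F2) :
    sixCols e1 e2 φ1 φ2 φ3 φ4 φ5 φ6 * spliceD e1 e2 =
    φ1 * row1 e1 e2 + (φ2 * row2 e1 e2 + (φ3 * row3 e1 e2 + (φ4 * row4 e1 e2 +
      (φ5 * row5 e1 e2 + φ6 * row6 e1 e2)))) := by
  simp only [sixCols, spliceD, Matrix.fromCols_mul_fromRows]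

theorem aux_row_inf (e1 e2 : SplicingDatum) {k l : ℕ}
    (U : Matrix (Fin k) (Fin e1.a0) F2) (V : Matrix (Fin l) (Fin e2.a0) F2)
    (hU : U * e1.B1 = 0) (hV : V * e2.B1 = 0) :
    sixCols e1 e2 (U ⊗ₖ V) 0 0 0 0 0 *
        spliceD e1 e2 = (0 : Matrix (Fin k × Fin l) _ F2) := by
  rw [aux_rows]
  simp only [Matrix.zero_mul, zero_add, add_zero, row1, X1M, Matrix.mul_fromCols,
    Matrix.mul_zero, Matrix.mul_add, ← Matrix.mul_kronecker_mul, Matrix.mul_one,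
    ← Matrix.mul_assoc, aux_fromCols_add, hU, hV, Matrix.zero_kronecker,
    Matrix.kronecker_zero, Matrix.add_kronecker, Matrix.kronecker_add, Matrix.fromCols_zero]
  try (
    refine aux_fromCols_eq_zero _ _ ?_ (aux_fromCols_eq_zero _ _ ?_ (aux_fromCols_eq_zero _ _ ?_
      (aux_fromCols_eq_zero _ _ ?_ (aux_fromCols_eq_zero _ _ ?_ ?_))))
    all_goals first | rfl | (abel_nf; done) | (abel_nf; simp only [aux_two, aux_two', add_zero, zero_add]))

theorem aux_row_10 (e1 e2 : SplicingDatum) {k l : ℕ}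
    (U : Matrix (Fin k) (Fin e1.ainf) F2) (V : Matrix (Fin l) (Fin e2.a1) F2)
    (hU : U * e1.B0 = 0) (hV : V * e2.Binf = 0) :
    sixCols e1 e2 0 (U ⊗ₖ V) 0 0 0 0 *
        spliceD e1 e2 = (0 : Matrix (Fin k × Fin l) _ F2) := by
  rw [aux_rows]
  simp only [Matrix.zero_mul, zero_add, add_zero, row2, X1M, Matrix.mul_fromCols,
    Matrix.mul_zero, Matrix.mul_add, ← Matrix.mul_kronecker_mul, Matrix.mul_one,
    ← Matrix.mul_assoc, aux_fromCols_add, hU, hV, Matrix.zero_kronecker,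
    Matrix.kronecker_zero, Matrix.add_kronecker, Matrix.kronecker_add, Matrix.fromCols_zero]
  try (
    refine aux_fromCols_eq_zero _ _ ?_ (aux_fromCols_eq_zero _ _ ?_ (aux_fromCols_eq_zero _ _ ?_
      (aux_fromCols_eq_zero _ _ ?_ (aux_fromCols_eq_zero _ _ ?_ ?_))))
    all_goals first | rfl | (abel_nf; done) | (abel_nf; simp only [aux_two, aux_two', add_zero, zero_add]))

theorem aux_row_01 (e1 e2 : SplicingDatum) {k l : ℕ}
    (U : Matrix (Fin k) (Fin e1.a1) F2) (V : Matrix (Fin l) (Fin e2.ainf) F2)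
    (hU : U * e1.Binf = 0) (hV : V * e2.B0 = 0) :
    sixCols e1 e2 0 0 0 (U ⊗ₖ V) 0 0 *
        spliceD e1 e2 = (0 : Matrix (Fin k × Fin l) _ F2) := by
  rw [aux_rows]
  simp only [Matrix.zero_mul, zero_add, add_zero, row4, X1M, Matrix.mul_fromCols,
    Matrix.mul_zero, Matrix.mul_add, ← Matrix.mul_kronecker_mul, Matrix.mul_one,
    ← Matrix.mul_assoc, aux_fromCols_add, hU, hV, Matrix.zero_kronecker,
    Matrix.kronecker_zero, Matrix.add_kronecker, Matrix.kronecker_add, Matrix.fromCols_zero]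
  try (
    refine aux_fromCols_eq_zero _ _ ?_ (aux_fromCols_eq_zero _ _ ?_ (aux_fromCols_eq_zero _ _ ?_
      (aux_fromCols_eq_zero _ _ ?_ (aux_fromCols_eq_zero _ _ ?_ ?_))))
    all_goals first | rfl | (abel_nf; done) | (abel_nf; simp only [aux_two, aux_two', add_zero, zero_add]))

theorem aux_row_d3 (e1 e2 : SplicingDatum) {k l : ℕ}
    (P : Matrix (Fin k) (Fin e1.a0) F2) (Q : Matrix (Fin k) (Fin e1.ainf) F2)
    (P' : Matrix (Fin l) (Fin e2.a1) F2) (Q' : Matrix (Fin l) (Fin e2.a0) F2)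
    (h1 : Q * e1.B0 = 0) (h2 : Q * e1.D1 * e1.A0 = Q + P * e1.B1 * e1.A0)
    (h3 : Q * e1.D1 * e1.B0 = P * e1.B1 * e1.B0)
    (h1' : Q' * e2.B1 = 0) (h2' : Q' * e2.Dinf * e2.A1 = Q' + P' * e2.Binf * e2.A1)
    (h3' : Q' * e2.Dinf * e2.B1 = P' * e2.Binf * e2.B1) :
    sixCols e1 e2 (P ⊗ₖ Q') (Q ⊗ₖ P') (Q ⊗ₖ Q') 0 0 0 *
        spliceD e1 e2 = (0 : Matrix (Fin k × Fin l) _ F2) := by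
  rw [aux_rows]
  simp only [Matrix.zero_mul, zero_add, add_zero, row1, row2, row3, X1M, Matrix.mul_fromCols,
    Matrix.mul_zero, Matrix.mul_add, ← Matrix.mul_kronecker_mul, Matrix.mul_one,
    ← Matrix.mul_assoc, aux_fromCols_add, h1, h2, h3, h1', h2', h3', Matrix.zero_kronecker,
    Matrix.kronecker_zero, Matrix.add_kronecker, Matrix.kronecker_add, Matrix.fromCols_zero]
  try (
    refine aux_fromCols_eq_zero _ _ ?_ (aux_fromCols_eq_zero _ _ ?_ (aux_fromCols_eq_zero _ _ ?_ rfl))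
    all_goals first | rfl | (abel_nf; done) | (abel_nf; simp only [aux_two, aux_two', add_zero, zero_add]))

theorem aux_row_d5 (e1 e2 : SplicingDatum) {k l : ℕ}
    (P : Matrix (Fin k) (Fin e1.a1) F2) (Q : Matrix (Fin k) (Fin e1.a0) F2)
    (P' : Matrix (Fin l) (Fin e2.a0) F2) (Q' : Matrix (Fin l) (Fin e2.ainf) F2)
    (h1 : Q * e1.B1 = 0) (h2 : Q * e1.Dinf * e1.A1 = Q + P * e1.Binf * e1.A1)
    (h3 : Q * e1.Dinf * e1.B1 = P * e1.Binf * e1.B1)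
    (h1' : Q' * e2.B0 = 0) (h2' : Q' * e2.D1 * e2.A0 = Q' + P' * e2.B1 * e2.A0)
    (h3' : Q' * e2.D1 * e2.B0 = P' * e2.B1 * e2.B0) :
    sixCols e1 e2 (Q ⊗ₖ P') 0 0 (P ⊗ₖ Q') (Q ⊗ₖ Q') 0 *
        spliceD e1 e2 = (0 : Matrix (Fin k × Fin l) _ F2) := by
  rw [aux_rows]
  simp only [Matrix.zero_mul, zero_add, add_zero, row1, row4, row5, X1M, Matrix.mul_fromCols,
    Matrix.mul_zero, Matrix.mul_add, ← Matrix.mul_kronecker_mul, Matrix.mul_one,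
    ← Matrix.mul_assoc, aux_fromCols_add, h1, h2, h3, h1', h2', h3', Matrix.zero_kronecker,
    Matrix.kronecker_zero, Matrix.add_kronecker, Matrix.kronecker_add, Matrix.fromCols_zero]
  try (
    refine aux_fromCols_eq_zero _ _ ?_ (aux_fromCols_eq_zero _ _ ?_ (aux_fromCols_eq_zero _ _ ?_
      (aux_fromCols_eq_zero _ _ ?_ (aux_fromCols_eq_zero _ _ ?_ ?_))))
    all_goals first | rfl | (abel_nf; done) | (abel_nf; simp only [aux_two, aux_two', add_zero, zero_add]))

theorem aux_row_d6 (e1 e2 : SplicingDatum) {k l : ℕ}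
    (P : Matrix (Fin k) (Fin e1.ainf) F2) (Q : Matrix (Fin k) (Fin e1.a1) F2)
    (P' : Matrix (Fin l) (Fin e2.ainf) F2) (Q' : Matrix (Fin l) (Fin e2.a1) F2)
    (h1 : Q * e1.Binf = 0) (h2 : Q * e1.D0 * e1.Ainf = Q + P * e1.B0 * e1.Ainf)
    (h3 : Q * e1.D0 * e1.Binf = P * e1.B0 * e1.Binf)
    (h1' : Q' * e2.Binf = 0) (h2' : Q' * e2.D0 * e2.Ainf = Q' + P' * e2.B0 * e2.Ainf)
    (h3' : Q' * e2.D0 * e2.Binf = P' * e2.B0 * e2.Binf) :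
    sixCols e1 e2 0 (P ⊗ₖ Q') 0 (Q ⊗ₖ P') 0 (Q ⊗ₖ Q') *
        spliceD e1 e2 = (0 : Matrix (Fin k × Fin l) _ F2) := by
  rw [aux_rows]
  simp only [Matrix.zero_mul, zero_add, add_zero, row2, row4, row6, X1M, Matrix.mul_fromCols,
    Matrix.mul_zero, Matrix.mul_add, ← Matrix.mul_kronecker_mul, Matrix.mul_one,
    ← Matrix.mul_assoc, aux_fromCols_add, h1, h2, h3, h1', h2', h3', Matrix.zero_kronecker,
    Matrix.kronecker_zero, Matrix.add_kronecker, Matrix.kronecker_add, Matrix.fromCols_zero]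
  try (
    refine aux_fromCols_eq_zero _ _ ?_ (aux_fromCols_eq_zero _ _ ?_ (aux_fromCols_eq_zero _ _ ?_
      (aux_fromCols_eq_zero _ _ ?_ (aux_fromCols_eq_zero _ _ ?_ ?_))))
    all_goals first | rfl | (abel_nf; done) | (abel_nf; simp only [aux_two, aux_two', add_zero, zero_add]))

theorem aux_fbarinfM (d : SplicingDatum) : d.fbarinfM =
    Matrix.fromBlocks (d.B1 * d.A0) (d.B1 * d.B0) (d.D1 * d.A0) (d.D1 * d.B0) := by
  simp [fbarinfM, finfM, tau1inv, tau0, Matrix.fromBlocks_multiply]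

theorem aux_cinf (d : SplicingDatum) :
    ∃ (U : Matrix (Fin d.cinf) (Fin d.a0) F2) (R : Matrix (Fin d.a0) (Fin d.cinf) F2),
      U * R = 1 ∧ U * d.B1 = 0 :=
  aux_c d.A0 d.B0 d.C0 d.D0 d.C0inv d.B1 d.D1 d.inv0_left d.finfM d.fbarinfM rfl
    d.aux_fbarinfM _ rfl

theorem aux_dinf (d : SplicingDatum) :
    ∃ (P : Matrix (Fin d.ddinf) (Fin d.a0) F2) (Q : Matrix (Fin d.ddinf) (Fin d.ainf) F2)
      (R : Matrix (Fin d.ainf) (Fin d.ddinf) F2), Q * R = 1 ∧ Q * d.B0 = 0 ∧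
      Q * d.D1 * d.A0 = Q + P * d.B1 * d.A0 ∧ Q * d.D1 * d.B0 = P * d.B1 * d.B0 :=
  aux_d d.A0 d.B0 d.C0 d.D0 d.C0inv d.B1 d.D1 d.inv0_left d.finfM d.fbarinfM rfl
    d.aux_fbarinfM _ rfl

theorem aux_fbar0M (d : SplicingDatum) : d.fbar0M =
    Matrix.fromBlocks (d.Binf * d.A1) (d.Binf * d.B1) (d.Dinf * d.A1) (d.Dinf * d.B1) := by
  simp [fbar0M, f0M, tauinfinv, tau1, Matrix.fromBlocks_multiply]

theorem aux_c0 (d : SplicingDatum) :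
    ∃ (U : Matrix (Fin d.c0) (Fin d.a1) F2) (R : Matrix (Fin d.a1) (Fin d.c0) F2),
      U * R = 1 ∧ U * d.Binf = 0 :=
  aux_c d.A1 d.B1 d.C1 d.D1 d.C1inv d.Binf d.Dinf d.inv1_left d.f0M d.fbar0M rfl
    d.aux_fbar0M _ rfl

theorem aux_d0 (d : SplicingDatum) :
    ∃ (P : Matrix (Fin d.dd0) (Fin d.a1) F2) (Q : Matrix (Fin d.dd0) (Fin d.a0) F2)
      (R : Matrix (Fin d.a0) (Fin d.dd0) F2), Q * R = 1 ∧ Q * d.B1 = 0 ∧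
      Q * d.Dinf * d.A1 = Q + P * d.Binf * d.A1 ∧ Q * d.Dinf * d.B1 = P * d.Binf * d.B1 :=
  aux_d d.A1 d.B1 d.C1 d.D1 d.C1inv d.Binf d.Dinf d.inv1_left d.f0M d.fbar0M rfl
    d.aux_fbar0M _ rfl

theorem aux_fbar1M (d : SplicingDatum) : d.fbar1M =
    Matrix.fromBlocks (d.B0 * d.Ainf) (d.B0 * d.Binf) (d.D0 * d.Ainf) (d.D0 * d.Binf) := by
  simp [fbar1M, f1M, tau0inv, tauinf, Matrix.fromBlocks_multiply]

theorem aux_c1 (d : SplicingDatum) :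
    ∃ (U : Matrix (Fin d.c1) (Fin d.ainf) F2) (R : Matrix (Fin d.ainf) (Fin d.c1) F2),
      U * R = 1 ∧ U * d.B0 = 0 :=
  aux_c d.Ainf d.Binf d.Cinf d.Dinf d.Cinfinv d.B0 d.D0 d.invinf_left d.f1M d.fbar1M rfl
    d.aux_fbar1M _ rfl

theorem aux_d1 (d : SplicingDatum) :
    ∃ (P : Matrix (Fin d.dd1) (Fin d.ainf) F2) (Q : Matrix (Fin d.dd1) (Fin d.a1) F2)
      (R : Matrix (Fin d.a1) (Fin d.dd1) F2), Q * R = 1 ∧ Q * d.Binf = 0 ∧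
      Q * d.D0 * d.Ainf = Q + P * d.B0 * d.Ainf ∧ Q * d.D0 * d.Binf = P * d.B0 * d.Binf :=
  aux_d d.Ainf d.Binf d.Cinf d.Dinf d.Cinfinv d.B0 d.D0 d.invinf_left d.f1M d.fbar1M rfl
    d.aux_fbar1M _ rfl

end SplicingDatum

theorem aux_kron_surj {k l m n : Type*} [Fintype k] [Fintype l] [Fintype m] [Fintype n]
    [DecidableEq k] [DecidableEq l] {U : Matrix k m F2} {V : Matrix l n F2}
    {R : Matrix m k F2} {S : Matrix n l F2} (hU : U * R = 1) (hV : V * S = 1)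
    (t : k × l → F2) : ∃ x, (U ⊗ₖ V) *ᵥ x = t :=
  ⟨(R ⊗ₖ S) *ᵥ t, by
    rw [Matrix.mulVec_mulVec, ← Matrix.mul_kronecker_mul, hU, hV, Matrix.one_kronecker_one,
      Matrix.one_mulVec]⟩

open SplicingDatum in
/-- lower bound for the dimension of the cokernel of the splicing map `D`. -/
theorem stmt6 (e1 e2 : SplicingDatum) :
    cdim (spliceD e1 e2) ≥
      e1.cinf * e2.cinf + e1.c0 * e2.c1 + e1.c1 * e2.c0 +
        e1.ddinf * e2.dd0 + e1.dd0 * e2.ddinf + e1.dd1 * e2.dd1 := by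
  obtain ⟨Uinf, Rinf, hUinf, hUBinf⟩ := e1.aux_cinf
  obtain ⟨Pinf, Qinf, Sinf, hQinf, hainf, hbinf, hcinf⟩ := e1.aux_dinf
  obtain ⟨U0, R0, hU0, hUB0⟩ := e1.aux_c0
  obtain ⟨P0, Q0, S0, hQ0, ha0, hb0, hc0⟩ := e1.aux_d0
  obtain ⟨U1, R1, hU1, hUB1⟩ := e1.aux_c1
  obtain ⟨P1, Q1, S1, hQ1, ha1, hb1, hc1⟩ := e1.aux_d1
  obtain ⟨Uinf', Rinf', hUinf', hUBinf'⟩ := e2.aux_cinf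
  obtain ⟨Pinf', Qinf', Sinf', hQinf', hainf', hbinf', hcinf'⟩ := e2.aux_dinf
  obtain ⟨U0', R0', hU0', hUB0'⟩ := e2.aux_c0
  obtain ⟨P0', Q0', S0', hQ0', ha0', hb0', hc0'⟩ := e2.aux_d0
  obtain ⟨U1', R1', hU1', hUB1'⟩ := e2.aux_c1
  obtain ⟨P1', Q1', S1', hQ1', ha1', hb1', hc1'⟩ := e2.aux_d1
  have g1 := aux_row_inf e1 e2 Uinf Uinf' hUBinf hUBinf'
  have g2 := aux_row_10 e1 e2 U1 U0' hUB1 hUB0'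
  have g4 := aux_row_01 e1 e2 U0 U1' hUB0 hUB1'
  have g3 := aux_row_d3 e1 e2 Pinf Qinf P0' Q0' hainf hbinf hcinf ha0' hb0' hc0'
  have g5 := aux_row_d5 e1 e2 P0 Q0 Pinf' Qinf' ha0 hb0 hc0 hainf' hbinf' hcinf'
  have g6 := aux_row_d6 e1 e2 P1 Q1 P1' Q1' ha1 hb1 hc1 ha1' hb1' hc1'
  have key := aux_cdim_ge (spliceD e1 e2)
    (Matrix.fromRows (sixCols e1 e2 (Uinf ⊗ₖ Uinf') 0 0 0 0 0) <|
      Matrix.fromRows (sixCols e1 e2 0 (U1 ⊗ₖ U0') 0 0 0 0) <|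
      Matrix.fromRows (sixCols e1 e2 0 0 0 (U0 ⊗ₖ U1') 0 0) <|
      Matrix.fromRows (sixCols e1 e2 (Pinf ⊗ₖ Q0') (Qinf ⊗ₖ P0') (Qinf ⊗ₖ Q0') 0 0 0) <|
      Matrix.fromRows (sixCols e1 e2 (Q0 ⊗ₖ Pinf') 0 0 (P0 ⊗ₖ Qinf') (Q0 ⊗ₖ Qinf') 0)
      (sixCols e1 e2 0 (P1 ⊗ₖ Q1') 0 (Q1 ⊗ₖ P1') 0 (Q1 ⊗ₖ Q1')))
    (by rw [Matrix.fromRows_mul, Matrix.fromRows_mul, Matrix.fromRows_mul, Matrix.fromRows_mul,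
          Matrix.fromRows_mul, g1, g2, g4, g3, g5, g6]
        simp only [Matrix.fromRows_zero])
    (by
      intro t
      obtain ⟨t1, t', rfl⟩ : ∃ a b, t = Sum.elim a b := ⟨_, _, (Sum.elim_comp_inl_inr t).symm⟩
      obtain ⟨t2, t', rfl⟩ : ∃ a b, t' = Sum.elim a b := ⟨_, _, (Sum.elim_comp_inl_inr t').symm⟩
      obtain ⟨t4, t', rfl⟩ : ∃ a b, t' = Sum.elim a b := ⟨_, _, (Sum.elim_comp_inl_inr t').symm⟩
      obtain ⟨t3, t', rfl⟩ : ∃ a b, t' = Sum.elim a b := ⟨_, _, (Sum.elim_comp_inl_inr t').symm⟩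
      obtain ⟨t5, t6, rfl⟩ : ∃ a b, t' = Sum.elim a b := ⟨_, _, (Sum.elim_comp_inl_inr t').symm⟩
      obtain ⟨x1, h1⟩ := aux_kron_surj hUinf hUinf' t1
      obtain ⟨x2, h2⟩ := aux_kron_surj hU1 hU0' t2
      obtain ⟨x4, h4⟩ := aux_kron_surj hU0 hU1' t4
      obtain ⟨x3, h3⟩ := aux_kron_surj hQinf hQ0'
        (t3 - ((Pinf ⊗ₖ Q0') *ᵥ x1 + (Qinf ⊗ₖ P0') *ᵥ x2))
      obtain ⟨x5, h5⟩ := aux_kron_surj hQ0 hQinf'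
        (t5 - ((P0 ⊗ₖ Qinf') *ᵥ x4 + (Q0 ⊗ₖ Pinf') *ᵥ x1))
      obtain ⟨x6, h6⟩ := aux_kron_surj hQ1 hQ1'
        (t6 - ((P1 ⊗ₖ Q1') *ᵥ x2 + (Q1 ⊗ₖ P1') *ᵥ x4))
      refine ⟨Sum.elim x1 (Sum.elim x2 (Sum.elim x3 (Sum.elim x4 (Sum.elim x5 x6)))), ?_⟩
      simp only [Matrix.mulVecLin_apply, Matrix.fromRows_mulVec, sixCols_mulVec,
        Matrix.zero_mulVec, h1, h2, h3, h4, h5, h6, zero_add, add_zero]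
      congr 1
      congr 1
      congr 1
      congr 1
      · abel
      · congr 1
        · abel
        · abel)
  simp only [Fintype.card_sum, Fintype.card_prod, Fintype.card_fin] at key
  linarith
end

section
/- (Lemma on injective/surjective blocks, part 1.) Let the notation be as in the context, with two splicing data (superscripts 1 and 2) and the splicing map D. Define iota(0) = inf, iota(1) = 1, iota(inf) = 0. Let (c, b, s) be one of the cyclic triples (0, 1, inf), (1, inf, 0), (inf, 0, 1). If the matrix B_c^2 is injective and the matrix B_b^2 is surjective, then: (a) dim ker(D) ≥ dim ker(B_{iota(c)}^1 · B_{iota(b)}^1) · dim ker(B_b^2 · B_c^2); and (b) dim coker(D) ≥ dim coker(B_{iota(c)}^1 · B_{iota(b)}^1) · dim coker(B_b^2 · B_c^2). -/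
set_option maxHeartbeats 1600000

open Matrix Module
open scoped Kronecker

namespace SpliceAux

theorem madd_self {m n : Type*} (X : Matrix m n F2) : X + X = 0 := by
  ext i j
  exact CharTwo.add_self_eq_zero (X i j)

theorem madd_self' {m n : Type*} (X Y : Matrix m n F2) : X + (X + Y) = Y := by
  rw [← add_assoc, madd_self, zero_add]

theorem eq_of_madd {m n : Type*} {X Y : Matrix m n F2} (h : X + Y = 0) : X = Y := by
  have h2 := madd_self' X Y
  rw [h, add_zero] at h2
  exact h2

theorem exists_left_inv {m n : Type*} [Fintype m] [Fintype n] [DecidableEq m] [DecidableEq n]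
    (M : Matrix m n F2) (h : Function.Injective M.mulVecLin) :
    ∃ L : Matrix n m F2, L * M = 1 := by
  obtain ⟨g, hg⟩ := LinearMap.exists_leftInverse_of_injective M.mulVecLin
    (LinearMap.ker_eq_bot.mpr h)
  refine ⟨LinearMap.toMatrix' g, ?_⟩
  apply Matrix.toLin'.injective
  rw [Matrix.toLin'_mul, Matrix.toLin'_toMatrix', Matrix.toLin'_one]
  exact hg

theorem exists_right_inv {m n : Type*} [Fintype m] [Fintype n] [DecidableEq m] [DecidableEq n]
    (M : Matrix m n F2) (h : Function.Surjective M.mulVecLin) :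
    ∃ R : Matrix n m F2, M * R = 1 := by
  obtain ⟨g, hg⟩ := LinearMap.exists_rightInverse_of_surjective M.mulVecLin
    (LinearMap.range_eq_top.mpr h)
  refine ⟨LinearMap.toMatrix' g, ?_⟩
  apply Matrix.toLin'.injective
  rw [Matrix.toLin'_mul, Matrix.toLin'_toMatrix', Matrix.toLin'_one]
  exact hg

/-- A matrix whose columns form a basis of the kernel. -/
theorem exists_ker {m n : Type*} [Fintype m] [Fintype n] [DecidableEq m] [DecidableEq n]
    (M : Matrix m n F2) :
    ∃ (N : Matrix n (Fin (kdim M)) F2) (L : Matrix (Fin (kdim M)) n F2),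
      M * N = 0 ∧ L * N = 1 := by
  let b := finBasis F2 (LinearMap.ker M.mulVecLin)
  let f : (Fin (kdim M) → F2) →ₗ[F2] (n → F2) :=
    (LinearMap.ker M.mulVecLin).subtype ∘ₗ b.equivFun.symm.toLinearMap
  have hf : Function.Injective f :=
    (Submodule.injective_subtype _).comp b.equivFun.symm.injective
  have hN : (LinearMap.toMatrix' f).mulVecLin = f := Matrix.toLin'_toMatrix' f
  obtain ⟨L, hL⟩ := exists_left_inv (LinearMap.toMatrix' f) (by rw [hN]; exact hf)
  refine ⟨LinearMap.toMatrix' f, L, ?_, hL⟩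
  apply Matrix.toLin'.injective
  rw [Matrix.toLin'_mul, Matrix.toLin'_toMatrix', map_zero]
  ext1 i
  ext1
  exact (b.equivFun.symm _).2

theorem exists_coker {m n : Type*} [Fintype m] [Fintype n] [DecidableEq m] [DecidableEq n]
    (M : Matrix m n F2) :
    ∃ (N : Matrix (Fin (cdim M)) m F2) (R : Matrix m (Fin (cdim M)) F2),
      N * M = 0 ∧ N * R = 1 := by
  let b := finBasis F2 ((m → F2) ⧸ LinearMap.range M.mulVecLin)
  let f : (m → F2) →ₗ[F2] (Fin (cdim M) → F2) :=
    b.equivFun.toLinearMap ∘ₗ (LinearMap.range M.mulVecLin).mkQ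
  have hf : Function.Surjective f :=
    b.equivFun.surjective.comp (Submodule.mkQ_surjective _)
  have hN : (LinearMap.toMatrix' f).mulVecLin = f := Matrix.toLin'_toMatrix' f
  obtain ⟨L, hL⟩ := exists_right_inv (LinearMap.toMatrix' f) (by rw [hN]; exact hf)
  refine ⟨LinearMap.toMatrix' f, L, ?_, hL⟩
  apply Matrix.toLin'.injective
  rw [Matrix.toLin'_mul, Matrix.toLin'_toMatrix', map_zero]
  apply LinearMap.ext
  intro v
  change b.equivFun ((LinearMap.range M.mulVecLin).mkQ (M.mulVecLin v)) = 0
  rw [LinearEquiv.map_eq_zero_iff, Submodule.mkQ_apply, Submodule.Quotient.mk_eq_zero]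
  exact LinearMap.mem_range_self _ v

theorem kdim_ge {m n k : Type*} [Fintype m] [Fintype n] [Fintype k]
    [DecidableEq m] [DecidableEq n] [DecidableEq k]
    (M : Matrix m n F2) (N : Matrix n k F2) (L : Matrix k n F2)
    (h : M * N = 0) (hL : L * N = 1) : Fintype.card k ≤ kdim M := by
  let f : (k → F2) →ₗ[F2] LinearMap.ker M.mulVecLin :=
    N.mulVecLin.codRestrict _ (by
      intro v
      rw [LinearMap.mem_ker, Matrix.mulVecLin_apply, Matrix.mulVecLin_apply,
        Matrix.mulVec_mulVec, h, Matrix.zero_mulVec])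
  have hf : Function.Injective f := by
    intro v w hvw
    have h1 : N *ᵥ v = N *ᵥ w := congrArg Subtype.val hvw
    have h2 := congrArg (fun z => L *ᵥ z) h1
    simpa [Matrix.mulVec_mulVec, hL] using h2
  have := LinearMap.finrank_le_finrank_of_injective hf
  rwa [Module.finrank_fintype_fun_eq_card] at this

theorem cdim_ge {m n k : Type*} [Fintype m] [Fintype n] [Fintype k]
    [DecidableEq m] [DecidableEq n] [DecidableEq k]
    (M : Matrix m n F2) (N : Matrix k m F2) (R : Matrix m k F2)
    (h : N * M = 0) (hR : N * R = 1) : Fintype.card k ≤ cdim M := by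
  let f : ((m → F2) ⧸ LinearMap.range M.mulVecLin) →ₗ[F2] (k → F2) :=
    (LinearMap.range M.mulVecLin).liftQ N.mulVecLin (by
      rintro _ ⟨v, rfl⟩
      rw [LinearMap.mem_ker, Matrix.mulVecLin_apply, Matrix.mulVecLin_apply,
        Matrix.mulVec_mulVec, h, Matrix.zero_mulVec])
  have hf : Function.Surjective f := by
    intro v
    refine ⟨Submodule.Quotient.mk (R *ᵥ v), ?_⟩
    change N *ᵥ (R *ᵥ v) = v
    rw [Matrix.mulVec_mulVec, hR, Matrix.one_mulVec]
  have := LinearMap.finrank_le_finrank_of_surjective hf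
  rwa [Module.finrank_fintype_fun_eq_card] at this

theorem fromRows_eq_zero {m1 m2 n : Type*} {A : Matrix m1 n F2} {B : Matrix m2 n F2}
    (hA : A = 0) (hB : B = 0) : Matrix.fromRows A B = 0 := by
  subst hA hB; ext (i | i) j <;> rfl

theorem fromCols_eq_zero {m1 m2 n : Type*} {A : Matrix n m1 F2} {B : Matrix n m2 F2}
    (hA : A = 0) (hB : B = 0) : Matrix.fromCols A B = 0 := by
  subst hA hB; ext i (j | j) <;> rfl

theorem fromCols_add_fromCols {m1 m2 n : Type*} (A A' : Matrix n m1 F2) (B B' : Matrix n m2 F2) :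
    Matrix.fromCols A B + Matrix.fromCols A' B' = Matrix.fromCols (A + A') (B + B') := by
  ext i (j | j) <;> rfl

/-- right-associated commutation and vanishing helpers -/
theorem post {l m n p q : Type*} [Fintype m] [Fintype n] [Fintype p]
    {A : Matrix l m F2} {B : Matrix m n F2} {C : Matrix l p F2} {D : Matrix p n F2}
    (h : A * B + C * D = 0) (Z : Matrix n q F2) : A * (B * Z) = C * (D * Z) := by
  rw [← Matrix.mul_assoc, ← Matrix.mul_assoc, eq_of_madd h]

theorem pre {l m n p q : Type*} [Fintype m] [Fintype l] [Fintype p]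
    {A : Matrix l m F2} {B : Matrix m n F2} {C : Matrix l p F2} {D : Matrix p n F2}
    (h : A * B + C * D = 0) (Z : Matrix q l F2) : Z * C * D = Z * A * B := by
  rw [Matrix.mul_assoc, Matrix.mul_assoc, eq_of_madd h]

open SplicingDatum

theorem ker_bound {m n p q : ℕ} (e1 e2 : SplicingDatum) (M : Matrix (Fin m) (Fin n) F2)
    (P : Matrix (Fin p) (Fin q) F2)
    (h : ∀ {k l : ℕ} (N1 : Matrix (Fin n) (Fin k) F2) (L1 : Matrix (Fin k) (Fin n) F2)
      (N2 : Matrix (Fin q) (Fin l) F2) (L2 : Matrix (Fin l) (Fin q) F2),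
      M * N1 = 0 → L1 * N1 = 1 → P * N2 = 0 → L2 * N2 = 1 →
      ∃ (E : Matrix (Src e1 e2) (Fin k × Fin l) F2) (L : Matrix (Fin k × Fin l) (Src e1 e2) F2),
        spliceD e1 e2 * E = 0 ∧ L * E = 1) :
    kdim (spliceD e1 e2) ≥ kdim M * kdim P := by
  obtain ⟨N1, L1, h1, h1'⟩ := exists_ker M
  obtain ⟨N2, L2, h2, h2'⟩ := exists_ker P
  obtain ⟨E, L, hE, hL⟩ := h N1 L1 N2 L2 h1 h1' h2 h2'
  simpa using kdim_ge _ E L hE hL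

theorem coker_bound {m n p q : ℕ} (e1 e2 : SplicingDatum) (M : Matrix (Fin m) (Fin n) F2)
    (P : Matrix (Fin p) (Fin q) F2)
    (h : ∀ {k l : ℕ} (N1 : Matrix (Fin k) (Fin m) F2) (R1 : Matrix (Fin m) (Fin k) F2)
      (N2 : Matrix (Fin l) (Fin p) F2) (R2 : Matrix (Fin p) (Fin l) F2),
      N1 * M = 0 → N1 * R1 = 1 → N2 * P = 0 → N2 * R2 = 1 →
      ∃ (E : Matrix (Fin k × Fin l) (Tgt e1 e2) F2) (R : Matrix (Tgt e1 e2) (Fin k × Fin l) F2),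
        E * spliceD e1 e2 = 0 ∧ E * R = 1) :
    cdim (spliceD e1 e2) ≥ cdim M * cdim P := by
  obtain ⟨N1, L1, h1, h1'⟩ := exists_coker M
  obtain ⟨N2, L2, h2, h2'⟩ := exists_coker P
  obtain ⟨E, L, hE, hL⟩ := h N1 L1 N2 L2 h1 h1' h2 h2'
  simpa using cdim_ge _ E L hE hL

/-- left inverse of a Kronecker product block -/
theorem kron_left {a b c k l : ℕ} {N1 : Matrix (Fin a) (Fin k) F2} {L1 : Matrix (Fin k) (Fin a) F2}
    {N2 : Matrix (Fin b) (Fin l) F2} {L2 : Matrix (Fin l) (Fin b) F2}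
    {B : Matrix (Fin c) (Fin b) F2} {LB : Matrix (Fin b) (Fin c) F2}
    (h1 : L1 * N1 = 1) (h2 : L2 * N2 = 1) (hB : LB * B = 1) :
    (L1 ⊗ₖ (L2 * LB)) * (N1 ⊗ₖ (B * N2)) = 1 := by
  rw [← Matrix.mul_kronecker_mul, h1, Matrix.mul_assoc, ← Matrix.mul_assoc LB, hB,
    Matrix.one_mul, h2, Matrix.one_kronecker_one]

theorem kron_right {a b c k l : ℕ} {N1 : Matrix (Fin k) (Fin a) F2} {R1 : Matrix (Fin a) (Fin k) F2}
    {N2 : Matrix (Fin l) (Fin b) F2} {R2 : Matrix (Fin b) (Fin l) F2}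
    {B : Matrix (Fin b) (Fin c) F2} {RB : Matrix (Fin c) (Fin b) F2}
    (h1 : N1 * R1 = 1) (h2 : N2 * R2 = 1) (hB : B * RB = 1) :
    (N1 ⊗ₖ (N2 * B)) * (R1 ⊗ₖ (RB * R2)) = 1 := by
  rw [← Matrix.mul_kronecker_mul, h1, Matrix.mul_assoc, ← Matrix.mul_assoc B, hB,
    Matrix.one_mul, h2, Matrix.one_kronecker_one]

theorem ker_case0 (e1 e2 : SplicingDatum) (hi : Function.Injective e2.B0.mulVecLin) :
    kdim (spliceD e1 e2) ≥ kdim (e1.Binf * e1.B1) * kdim (e2.B1 * e2.B0) := by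
  obtain ⟨LB, hB⟩ := exists_left_inv _ hi
  refine ker_bound e1 e2 _ _ fun N1 L1 N2 L2 h1 h1' h2 h2' => ?_
  rw [Matrix.mul_assoc] at h1 h2
  refine ⟨fromRows (N1 ⊗ₖ (e2.B0 * N2)) (fromRows 0 (fromRows 0 (fromRows 0
    (fromRows ((e1.Dinf * (e1.B1 * N1)) ⊗ₖ (e2.D0 * N2)) 0)))),
    fromCols (L1 ⊗ₖ (L2 * LB)) 0, ?_, ?_⟩
  · unfold spliceD row1 row2 row3 row4 row5 row6
    simp only [fromRows_mul, fromCols_mul_fromRows]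
    refine fromRows_eq_zero ?_ (fromRows_eq_zero ?_ (fromRows_eq_zero ?_
      (fromRows_eq_zero ?_ (fromRows_eq_zero ?_ ?_)))) <;>
    simp [Matrix.add_mul, ← mul_kronecker_mul, Matrix.mul_assoc, X1M, h1, h2, post e2.comm0,
      ← post e1.comminf, madd_self]
  · rw [fromCols_mul_fromRows, kron_left h1' h2' hB, Matrix.zero_mul, add_zero]

theorem ker_case1 (e1 e2 : SplicingDatum) (hi : Function.Injective e2.B1.mulVecLin) :
    kdim (spliceD e1 e2) ≥ kdim (e1.B1 * e1.B0) * kdim (e2.Binf * e2.B1) := by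
  obtain ⟨LB, hB⟩ := exists_left_inv _ hi
  refine ker_bound e1 e2 _ _ fun N1 L1 N2 L2 h1 h1' h2 h2' => ?_
  rw [Matrix.mul_assoc] at h1 h2
  refine ⟨fromRows ((e1.D1 * (e1.B0 * N1)) ⊗ₖ (e2.D1 * N2)) (fromRows 0 (fromRows
    (N1 ⊗ₖ (e2.B1 * N2)) 0)),
    fromCols 0 (fromCols 0 (fromCols (L1 ⊗ₖ (L2 * LB)) 0)), ?_, ?_⟩
  · unfold spliceD row1 row2 row3 row4 row5 row6
    simp only [fromRows_mul, fromCols_mul_fromRows]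
    refine fromRows_eq_zero ?_ (fromRows_eq_zero ?_ (fromRows_eq_zero ?_
      (fromRows_eq_zero ?_ (fromRows_eq_zero ?_ ?_)))) <;>
    simp [Matrix.add_mul, ← mul_kronecker_mul, Matrix.mul_assoc, X1M, h1, h2, post e2.comm1,
      ← post e1.comm1, madd_self]
  · simp only [fromCols_mul_fromRows, kron_left h1' h2' hB, Matrix.zero_mul, add_zero, zero_add]

theorem ker_case2 (e1 e2 : SplicingDatum) (hi : Function.Injective e2.Binf.mulVecLin) :
    kdim (spliceD e1 e2) ≥ kdim (e1.B0 * e1.Binf) * kdim (e2.B0 * e2.Binf) := by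
  obtain ⟨LB, hB⟩ := exists_left_inv _ hi
  refine ker_bound e1 e2 _ _ fun N1 L1 N2 L2 h1 h1' h2 h2' => ?_
  rw [Matrix.mul_assoc] at h1 h2
  refine ⟨fromRows 0 (fromRows 0 (fromRows ((e1.D0 * (e1.Binf * N1)) ⊗ₖ (e2.Dinf * N2))
    (fromRows 0 (fromRows (N1 ⊗ₖ (e2.Binf * N2)) 0)))),
    fromCols 0 (fromCols 0 (fromCols 0 (fromCols 0 (fromCols (L1 ⊗ₖ (L2 * LB)) 0)))), ?_, ?_⟩
  · unfold spliceD row1 row2 row3 row4 row5 row6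
    simp only [fromRows_mul, fromCols_mul_fromRows]
    refine fromRows_eq_zero ?_ (fromRows_eq_zero ?_ (fromRows_eq_zero ?_
      (fromRows_eq_zero ?_ (fromRows_eq_zero ?_ ?_)))) <;>
    simp [Matrix.add_mul, ← mul_kronecker_mul, Matrix.mul_assoc, X1M, h1, h2, post e2.comminf,
      ← post e1.comm0, madd_self]
  · simp only [fromCols_mul_fromRows, kron_left h1' h2' hB, Matrix.zero_mul, add_zero, zero_add]

theorem coker_case0 (e1 e2 : SplicingDatum) (hs : Function.Surjective e2.B1.mulVecLin) :
    cdim (spliceD e1 e2) ≥ cdim (e1.Binf * e1.B1) * cdim (e2.B1 * e2.B0) := by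
  obtain ⟨RB, hB⟩ := exists_right_inv _ hs
  refine coker_bound e1 e2 _ _ fun N1 L1 N2 L2 h1 h1' h2 h2' => ?_
  rw [← Matrix.mul_assoc] at h1 h2
  refine ⟨fromCols ((N1 * e1.Binf * e1.A1) ⊗ₖ (N2 * e2.A1)) (fromCols 0 (fromCols 0
    (fromCols (N1 ⊗ₖ (N2 * e2.B1))
    (fromCols ((N1 * e1.Binf * e1.A1) ⊗ₖ (N2 * e2.B1)) 0)))),
    fromRows 0 (fromRows 0 (fromRows 0 (fromRows (L1 ⊗ₖ (RB * L2)) 0))), ?_, ?_⟩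
  · unfold spliceD row1 row2 row3 row4 row5 row6
    simp only [mul_fromCols, fromCols_mul_fromRows, fromCols_add_fromCols, Matrix.zero_mul,
      Matrix.mul_zero, add_zero, zero_add]
    refine fromCols_eq_zero ?_ (fromCols_eq_zero ?_ (fromCols_eq_zero ?_
      (fromCols_eq_zero ?_ (fromCols_eq_zero ?_ ?_)))) <;>
    simp [Matrix.mul_add, ← mul_kronecker_mul, ← Matrix.mul_assoc, X1M, h1, h2, pre e2.comm1,
      ← pre e1.comm1, madd_self, madd_self', add_comm, add_left_comm]
  · simp only [fromCols_mul_fromRows, kron_right h1' h2' hB, Matrix.mul_zero, add_zero, zero_add]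

theorem coker_case1 (e1 e2 : SplicingDatum) (hs : Function.Surjective e2.Binf.mulVecLin) :
    cdim (spliceD e1 e2) ≥ cdim (e1.B1 * e1.B0) * cdim (e2.Binf * e2.B1) := by
  obtain ⟨RB, hB⟩ := exists_right_inv _ hs
  refine coker_bound e1 e2 _ _ fun N1 L1 N2 L2 h1 h1' h2 h2' => ?_
  rw [← Matrix.mul_assoc] at h1 h2
  refine ⟨fromCols (N1 ⊗ₖ (N2 * e2.Binf)) (fromCols ((N1 * e1.B1 * e1.A0) ⊗ₖ (N2 * e2.Ainf))
    (fromCols ((N1 * e1.B1 * e1.A0) ⊗ₖ (N2 * e2.Binf)) 0)),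
    fromRows (L1 ⊗ₖ (RB * L2)) 0, ?_, ?_⟩
  · unfold spliceD row1 row2 row3 row4 row5 row6
    simp only [mul_fromCols, fromCols_mul_fromRows, fromCols_add_fromCols, Matrix.zero_mul,
      Matrix.mul_zero, add_zero, zero_add]
    refine fromCols_eq_zero ?_ (fromCols_eq_zero ?_ (fromCols_eq_zero ?_
      (fromCols_eq_zero ?_ (fromCols_eq_zero ?_ ?_)))) <;>
    simp [Matrix.mul_add, ← mul_kronecker_mul, ← Matrix.mul_assoc, X1M, h1, h2, pre e2.comminf,
      ← pre e1.comm0, madd_self, madd_self', add_comm, add_left_comm]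
  · simp only [fromCols_mul_fromRows, kron_right h1' h2' hB, Matrix.mul_zero, add_zero, zero_add]

theorem coker_case2 (e1 e2 : SplicingDatum) (hs : Function.Surjective e2.B0.mulVecLin) :
    cdim (spliceD e1 e2) ≥ cdim (e1.B0 * e1.Binf) * cdim (e2.B0 * e2.Binf) := by
  obtain ⟨RB, hB⟩ := exists_right_inv _ hs
  refine coker_bound e1 e2 _ _ fun N1 L1 N2 L2 h1 h1' h2 h2' => ?_
  rw [← Matrix.mul_assoc] at h1 h2
  refine ⟨fromCols 0 (fromCols (N1 ⊗ₖ (N2 * e2.B0)) (fromCols 0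
    (fromCols ((N1 * e1.B0 * e1.Ainf) ⊗ₖ (N2 * e2.A0)) (fromCols 0
    ((N1 * e1.B0 * e1.Ainf) ⊗ₖ (N2 * e2.B0)))))),
    fromRows 0 (fromRows (L1 ⊗ₖ (RB * L2)) 0), ?_, ?_⟩
  · unfold spliceD row1 row2 row3 row4 row5 row6
    simp only [mul_fromCols, fromCols_mul_fromRows, fromCols_add_fromCols, Matrix.zero_mul,
      Matrix.mul_zero, add_zero, zero_add]
    refine fromCols_eq_zero ?_ (fromCols_eq_zero ?_ (fromCols_eq_zero ?_
      (fromCols_eq_zero ?_ (fromCols_eq_zero ?_ ?_)))) <;>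
    simp [Matrix.mul_add, ← mul_kronecker_mul, ← Matrix.mul_assoc, X1M, h1, h2, pre e2.comm0,
      ← pre e1.comminf, madd_self, madd_self', add_comm, add_left_comm]
  · simp only [fromCols_mul_fromRows, kron_right h1' h2' hB, Matrix.mul_zero, add_zero, zero_add]

end SpliceAux

open SplicingDatum in
/-- Lemma on injective/surjective blocks, part 1.  The three conjuncts
correspond to the cyclic triples `(c,b,s) = (0,1,∞), (1,∞,0), (∞,0,1)`, with
`iota(0) = ∞`, `iota(1) = 1`, `iota(∞) = 0`. -/
theorem stmt8 (e1 e2 : SplicingDatum) :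
    ((Function.Injective e2.B0.mulVecLin ∧ Function.Surjective e2.B1.mulVecLin) →
      kdim (spliceD e1 e2) ≥ kdim (e1.Binf * e1.B1) * kdim (e2.B1 * e2.B0) ∧
      cdim (spliceD e1 e2) ≥ cdim (e1.Binf * e1.B1) * cdim (e2.B1 * e2.B0)) ∧
    ((Function.Injective e2.B1.mulVecLin ∧ Function.Surjective e2.Binf.mulVecLin) →
      kdim (spliceD e1 e2) ≥ kdim (e1.B1 * e1.B0) * kdim (e2.Binf * e2.B1) ∧
      cdim (spliceD e1 e2) ≥ cdim (e1.B1 * e1.B0) * cdim (e2.Binf * e2.B1)) ∧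
    ((Function.Injective e2.Binf.mulVecLin ∧ Function.Surjective e2.B0.mulVecLin) →
      kdim (spliceD e1 e2) ≥ kdim (e1.B0 * e1.Binf) * kdim (e2.B0 * e2.Binf) ∧
      cdim (spliceD e1 e2) ≥ cdim (e1.B0 * e1.Binf) * cdim (e2.B0 * e2.Binf)) := by
  exact ⟨fun h => ⟨SpliceAux.ker_case0 e1 e2 h.1, SpliceAux.coker_case0 e1 e2 h.2⟩,
    fun h => ⟨SpliceAux.ker_case1 e1 e2 h.1, SpliceAux.coker_case1 e1 e2 h.2⟩,
    fun h => ⟨SpliceAux.ker_case2 e1 e2 h.1, SpliceAux.coker_case2 e1 e2 h.2⟩⟩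
end

section
/- (Lemma on injective/surjective blocks, part 2.) Let the notation be as in the context, with two splicing data (superscripts 1 and 2) and the splicing map D. Define iota(0) = inf, iota(1) = 1, iota(inf) = 0. Let (c, b, s) be one of the cyclic triples (0, 1, inf), (1, inf, 0), (inf, 0, 1). If the matrix B_c^2 is surjective and the matrix B_b^2 is injective, then: (a) dim ker(D) ≥ dim ker(B_{iota(b)}^1 · B_{iota(s)}^1) · dim ker(B_s^2 · B_b^2); and (b) dim coker(D) ≥ dim coker(B_{iota(s)}^1 · B_{iota(c)}^1) · dim coker(B_c^2 · B_s^2). -/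
set_option maxHeartbeats 1600000

open Matrix Module
open scoped Kronecker

section Helpers

theorem exists_leftInv_of_inj {m n : Type*} [Fintype m] [Fintype n] [DecidableEq m] [DecidableEq n]
    (M : Matrix m n F2) (h : Function.Injective M.mulVecLin) : ∃ L : Matrix n m F2, L * M = 1 := by
  obtain ⟨g, hg⟩ := LinearMap.exists_leftInverse_of_injective M.mulVecLin
    (LinearMap.ker_eq_bot.mpr h)
  refine ⟨LinearMap.toMatrix' g, ?_⟩
  have h2 := congrArg LinearMap.toMatrix' hg
  rw [LinearMap.toMatrix'_comp, ← Matrix.toLin'_apply', LinearMap.toMatrix'_toLin',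
    LinearMap.toMatrix'_id] at h2
  exact h2

theorem exists_rightInv_of_surj {m n : Type*} [Fintype m] [Fintype n] [DecidableEq m]
    [DecidableEq n]
    (M : Matrix m n F2) (h : Function.Surjective M.mulVecLin) : ∃ L : Matrix n m F2, M * L = 1 := by
  obtain ⟨g, hg⟩ := LinearMap.exists_rightInverse_of_surjective M.mulVecLin
    (LinearMap.range_eq_top.mpr h)
  refine ⟨LinearMap.toMatrix' g, ?_⟩
  have h2 := congrArg LinearMap.toMatrix' hg
  rw [LinearMap.toMatrix'_comp, ← Matrix.toLin'_apply', LinearMap.toMatrix'_toLin',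
    LinearMap.toMatrix'_id] at h2
  exact h2

theorem exists_kerMat {m n : Type*} [Fintype m] [Fintype n] [DecidableEq m] [DecidableEq n]
    (M : Matrix m n F2) : ∃ (N : Matrix n (Fin (kdim M)) F2) (L : Matrix (Fin (kdim M)) n F2),
      M * N = 0 ∧ L * N = 1 := by
  let e : (Fin (kdim M) → F2) ≃ₗ[F2] ↥(LinearMap.ker M.mulVecLin) :=
    (LinearEquiv.ofFinrankEq _ _ (by rw [Module.finrank_fin_fun]; rfl))
  let f : (Fin (kdim M) → F2) →ₗ[F2] (n → F2) := (LinearMap.ker M.mulVecLin).subtype ∘ₗ e.toLinearMap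
  have hf : Function.Injective f := Subtype.val_injective.comp e.injective
  obtain ⟨L, hL⟩ := exists_leftInv_of_inj (LinearMap.toMatrix' f) (by
    simpa [← Matrix.toLin'_apply'] using hf)
  refine ⟨LinearMap.toMatrix' f, L, ?_, hL⟩
  apply Matrix.toLin'.injective
  rw [Matrix.toLin'_mul]
  apply LinearMap.ext
  intro v
  simp only [Matrix.toLin'_toMatrix', LinearMap.comp_apply, map_zero, LinearMap.zero_apply]
  exact (e v).2

theorem exists_cokerMat {m n : Type*} [Fintype m] [Fintype n] [DecidableEq m] [DecidableEq n]
    (M : Matrix m n F2) : ∃ (P : Matrix (Fin (cdim M)) m F2) (R : Matrix m (Fin (cdim M)) F2),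
      P * M = 0 ∧ P * R = 1 := by
  let e : ((m → F2) ⧸ LinearMap.range M.mulVecLin) ≃ₗ[F2] (Fin (cdim M) → F2) :=
    (LinearEquiv.ofFinrankEq _ _ (by rw [Module.finrank_fin_fun]; rfl))
  let f : (m → F2) →ₗ[F2] (Fin (cdim M) → F2) :=
    e.toLinearMap ∘ₗ (LinearMap.range M.mulVecLin).mkQ
  have hf : Function.Surjective f := e.surjective.comp (Submodule.mkQ_surjective _)
  obtain ⟨R, hR⟩ := exists_rightInv_of_surj (LinearMap.toMatrix' f) (by
    simpa [← Matrix.toLin'_apply'] using hf)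
  refine ⟨LinearMap.toMatrix' f, R, ?_, hR⟩
  apply Matrix.toLin'.injective
  rw [Matrix.toLin'_mul, Matrix.toLin'_toMatrix', map_zero]
  apply LinearMap.ext
  intro v
  have : (LinearMap.range M.mulVecLin).mkQ (Matrix.toLin' M v) = 0 := by
    rw [Submodule.mkQ_apply, Submodule.Quotient.mk_eq_zero]
    exact ⟨v, rfl⟩
  simp only [f, LinearMap.comp_apply, this, map_zero, LinearMap.zero_apply]

theorem card_le_kdim {m n κ : Type*} [Fintype m] [Fintype n] [Fintype κ] [DecidableEq κ]
    (M : Matrix m n F2) (V : Matrix n κ F2) (L : Matrix κ n F2) (h0 : M * V = 0) (h1 : L * V = 1) :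
    Fintype.card κ ≤ kdim M := by
  have hmem : ∀ v, V.mulVecLin v ∈ LinearMap.ker M.mulVecLin := by
    intro v
    simp [LinearMap.mem_ker, Matrix.mulVec_mulVec, h0]
  have hinj : Function.Injective (LinearMap.codRestrict _ V.mulVecLin hmem) := by
    intro v w hvw
    have h2 : V *ᵥ v = V *ᵥ w := congrArg Subtype.val hvw
    have h3 := congrArg (L *ᵥ ·) h2
    simpa [Matrix.mulVec_mulVec, h1] using h3
  have := LinearMap.finrank_le_finrank_of_injective hinj
  simpa [kdim] using this

theorem card_le_cdim {m n κ : Type*} [Fintype m] [Fintype n] [Fintype κ] [DecidableEq κ]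
    (M : Matrix m n F2) (V : Matrix κ m F2) (R : Matrix m κ F2) (h0 : V * M = 0) (h1 : V * R = 1) :
    Fintype.card κ ≤ cdim M := by
  have hle : LinearMap.range M.mulVecLin ≤ LinearMap.ker V.mulVecLin := by
    rintro _ ⟨v, rfl⟩
    simp [LinearMap.mem_ker, Matrix.mulVec_mulVec, h0]
  have hsurj : Function.Surjective (Submodule.liftQ _ V.mulVecLin hle) := by
    intro w
    refine ⟨Submodule.Quotient.mk (R *ᵥ w), ?_⟩
    simp [Matrix.mulVec_mulVec, h1]
  have := LinearMap.finrank_le_finrank_of_surjective hsurj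
  simpa [cdim] using this

theorem add_self_F2 {m n : Type*} (M : Matrix m n F2) : M + M = 0 := by
  ext i j
  exact CharTwo.add_self_eq_zero _

theorem fromCols_add' {m n k : Type*} (A C : Matrix m n F2) (B D : Matrix m k F2) :
    Matrix.fromCols A B + Matrix.fromCols C D = Matrix.fromCols (A + C) (B + D) := by
  ext i (j | j) <;> rfl

theorem fromCols_zero' {m n k : Type*} :
    Matrix.fromCols (0 : Matrix m n F2) (0 : Matrix m k F2) = 0 := by
  ext i (j | j) <;> rfl

theorem fromRows_zero' {m n k : Type*} :
    Matrix.fromRows (0 : Matrix n m F2) (0 : Matrix k m F2) = 0 := by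
  ext (j | j) i <;> rfl

theorem eq_of_add_F2 {m n : Type*} {A B : Matrix m n F2} (h : A + B = 0) : A = B := by
  have h2 := congrArg (· + B) h
  simpa [add_assoc, add_self_F2] using h2

theorem pull2 {l m n k : Type*} [Fintype m] [Fintype n]
    {A : Matrix l m F2} {B : Matrix m n F2} {C : Matrix l n F2} (h : A * B = C)
    (Z : Matrix n k F2) : A * (B * Z) = C * Z := by
  rw [← Matrix.mul_assoc, h]

theorem comm2 {m n k : Type*} [Fintype m] [Fintype n]
    {A : Matrix m m F2} {B : Matrix m n F2} {D : Matrix n n F2} (h : A * B + B * D = 0)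
    (Z : Matrix n k F2) : A * (B * Z) = B * (D * Z) := by
  rw [← Matrix.mul_assoc, eq_of_add_F2 h, Matrix.mul_assoc]

theorem comm3 {m n k : Type*} [Fintype m] [Fintype n]
    {A : Matrix m m F2} {B : Matrix m n F2} {D : Matrix n n F2} (h : A * B + B * D = 0)
    (Z : Matrix k m F2) : Z * A * B = Z * B * D := by
  rw [Matrix.mul_assoc, eq_of_add_F2 h, Matrix.mul_assoc]

end Helpers

namespace SplicingDatum

theorem ker_case1 (e1 e2 : SplicingDatum) (hi : Function.Injective e2.B1.mulVecLin) :
    kdim (e1.B1 * e1.B0) * kdim (e2.Binf * e2.B1) ≤ kdim (spliceD e1 e2) := by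
  obtain ⟨N, L, hN, hL⟩ := exists_kerMat (e1.B1 * e1.B0)
  obtain ⟨N', L', hN', hL'⟩ := exists_kerMat (e2.Binf * e2.B1)
  obtain ⟨J, hJ⟩ := exists_leftInv_of_inj _ hi
  have c1 := fun (k : ℕ) (Z : Matrix _ (Fin k) F2) => (comm2 e1.comm1 Z).symm
  have c2 := fun (k : ℕ) (Z : Matrix _ (Fin k) F2) => comm2 e2.comm1 Z
  rw [Matrix.mul_assoc] at hN hN'
  have := card_le_kdim (spliceD e1 e2)
    (Matrix.fromRows ((e1.D1 * e1.B0 * N) ⊗ₖ (e2.D1 * N')) <| Matrix.fromRows 0 <|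
      Matrix.fromRows (N ⊗ₖ (e2.B1 * N')) <| Matrix.fromRows 0 <| Matrix.fromRows 0 0)
    (Matrix.fromCols 0 <| Matrix.fromCols 0 <| Matrix.fromCols (L ⊗ₖ (L' * J)) <|
      Matrix.fromCols 0 <| Matrix.fromCols 0 0)
    (by
      simp only [spliceD, row1, row2, row3, row4, row5, row6, Matrix.fromRows_mul,
        Matrix.fromCols_mul_fromRows, Matrix.add_mul, ← Matrix.mul_kronecker_mul, Matrix.one_mul,
        Matrix.mul_assoc, Matrix.mul_zero, Matrix.zero_mul, add_zero, zero_add,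
        Matrix.kronecker_zero, Matrix.zero_kronecker, hN, hN', c1, c2, add_self_F2,
        fromRows_zero'])
    (by
      simp only [Matrix.fromCols_mul_fromRows, ← Matrix.mul_kronecker_mul, Matrix.mul_assoc,
        pull2 hJ, hL, hL', Matrix.one_mul, Matrix.mul_zero, Matrix.zero_mul, add_zero, zero_add,
        Matrix.one_kronecker_one])
  simpa using this

theorem ker_case2 (e1 e2 : SplicingDatum) (hi : Function.Injective e2.Binf.mulVecLin) :
    kdim (e1.B0 * e1.Binf) * kdim (e2.B0 * e2.Binf) ≤ kdim (spliceD e1 e2) := by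
  obtain ⟨N, L, hN, hL⟩ := exists_kerMat (e1.B0 * e1.Binf)
  obtain ⟨N', L', hN', hL'⟩ := exists_kerMat (e2.B0 * e2.Binf)
  obtain ⟨J, hJ⟩ := exists_leftInv_of_inj _ hi
  have c1 := fun (k : ℕ) (Z : Matrix _ (Fin k) F2) => (comm2 e1.comm0 Z).symm
  have c2 := fun (k : ℕ) (Z : Matrix _ (Fin k) F2) => comm2 e2.comminf Z
  rw [Matrix.mul_assoc] at hN hN'
  have := card_le_kdim (spliceD e1 e2)
    (Matrix.fromRows 0 <| Matrix.fromRows 0 <|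
      Matrix.fromRows ((e1.D0 * e1.Binf * N) ⊗ₖ (e2.Dinf * N')) <| Matrix.fromRows 0 <|
      Matrix.fromRows (N ⊗ₖ (e2.Binf * N')) 0)
    (Matrix.fromCols 0 <| Matrix.fromCols 0 <| Matrix.fromCols 0 <|
      Matrix.fromCols 0 <| Matrix.fromCols (L ⊗ₖ (L' * J)) 0)
    (by
      simp only [spliceD, row1, row2, row3, row4, row5, row6, X1M, Matrix.fromRows_mul,
        Matrix.fromCols_mul_fromRows, Matrix.add_mul, ← Matrix.mul_kronecker_mul, Matrix.one_mul,
        Matrix.mul_assoc, Matrix.mul_zero, Matrix.zero_mul, add_zero, zero_add,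
        Matrix.kronecker_zero, Matrix.zero_kronecker, hN, hN', c1, c2, add_self_F2,
        fromRows_zero'])
    (by
      simp only [Matrix.fromCols_mul_fromRows, ← Matrix.mul_kronecker_mul, Matrix.mul_assoc,
        pull2 hJ, hL, hL', Matrix.one_mul, Matrix.mul_zero, Matrix.zero_mul, add_zero, zero_add,
        Matrix.one_kronecker_one])
  simpa using this

theorem ker_case3 (e1 e2 : SplicingDatum) (hi : Function.Injective e2.B0.mulVecLin) :
    kdim (e1.Binf * e1.B1) * kdim (e2.B1 * e2.B0) ≤ kdim (spliceD e1 e2) := by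
  obtain ⟨N, L, hN, hL⟩ := exists_kerMat (e1.Binf * e1.B1)
  obtain ⟨N', L', hN', hL'⟩ := exists_kerMat (e2.B1 * e2.B0)
  obtain ⟨J, hJ⟩ := exists_leftInv_of_inj _ hi
  have c1 := fun (k : ℕ) (Z : Matrix _ (Fin k) F2) => (comm2 e1.comminf Z).symm
  have c2 := fun (k : ℕ) (Z : Matrix _ (Fin k) F2) => comm2 e2.comm0 Z
  rw [Matrix.mul_assoc] at hN hN'
  have := card_le_kdim (spliceD e1 e2)
    (Matrix.fromRows (N ⊗ₖ (e2.B0 * N')) <| Matrix.fromRows 0 <|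
      Matrix.fromRows 0 <| Matrix.fromRows 0 <|
      Matrix.fromRows ((e1.Dinf * e1.B1 * N) ⊗ₖ (e2.D0 * N')) 0)
    (Matrix.fromCols (L ⊗ₖ (L' * J)) <| Matrix.fromCols 0 <| Matrix.fromCols 0 <|
      Matrix.fromCols 0 <| Matrix.fromCols 0 0)
    (by
      simp only [spliceD, row1, row2, row3, row4, row5, row6, X1M, Matrix.fromRows_mul,
        Matrix.fromCols_mul_fromRows, Matrix.add_mul, ← Matrix.mul_kronecker_mul, Matrix.one_mul,
        Matrix.mul_assoc, Matrix.mul_zero, Matrix.zero_mul, add_zero, zero_add,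
        Matrix.kronecker_zero, Matrix.zero_kronecker, hN, hN', c1, c2, add_self_F2,
        fromRows_zero'])
    (by
      simp only [Matrix.fromCols_mul_fromRows, ← Matrix.mul_kronecker_mul, Matrix.mul_assoc,
        pull2 hJ, hL, hL', Matrix.one_mul, Matrix.mul_zero, Matrix.zero_mul, add_zero, zero_add,
        Matrix.one_kronecker_one])
  simpa using this

theorem coker_case1 (e1 e2 : SplicingDatum) (hs : Function.Surjective e2.B0.mulVecLin) :
    cdim (e1.B0 * e1.Binf) * cdim (e2.B0 * e2.Binf) ≤ cdim (spliceD e1 e2) := by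
  obtain ⟨P, R, hP, hR⟩ := exists_cokerMat (e1.B0 * e1.Binf)
  obtain ⟨P', R', hP', hR'⟩ := exists_cokerMat (e2.B0 * e2.Binf)
  obtain ⟨J, hJ⟩ := exists_rightInv_of_surj _ hs
  have z1 : P * e1.B0 * e1.Binf = 0 := by rw [Matrix.mul_assoc, hP]
  have z2 : P' * e2.B0 * e2.Binf = 0 := by rw [Matrix.mul_assoc, hP']
  have c1 := fun (k : ℕ) (Z : Matrix (Fin k) _ F2) => comm3 e1.comminf Z
  have c2 := fun (k : ℕ) (Z : Matrix (Fin k) _ F2) => comm3 e2.comm0 Z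
  have := card_le_cdim (spliceD e1 e2)
    (Matrix.fromCols 0 <| Matrix.fromCols (P ⊗ₖ (P' * e2.B0)) <| Matrix.fromCols 0 <|
      Matrix.fromCols ((P * e1.B0 * e1.Ainf) ⊗ₖ (P' * e2.A0)) <| Matrix.fromCols 0
        ((P * e1.B0 * e1.Ainf) ⊗ₖ (P' * e2.B0)))
    (Matrix.fromRows 0 <| Matrix.fromRows (R ⊗ₖ (J * R')) <| Matrix.fromRows 0 <|
      Matrix.fromRows 0 <| Matrix.fromRows 0 0)
    (by
      simp only [spliceD, row1, row2, row3, row4, row5, row6, X1M, Matrix.mul_fromCols,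
        Matrix.fromCols_mul_fromRows, Matrix.mul_add, ← Matrix.mul_kronecker_mul, Matrix.mul_one,
        ← Matrix.mul_assoc, Matrix.mul_zero, Matrix.zero_mul, add_zero, zero_add,
        Matrix.kronecker_zero, Matrix.zero_kronecker, z1, z2, c1, c2, add_self_F2,
        fromCols_add', fromCols_zero']
      try abel_nf
      try simp [add_self_F2, fromCols_zero', two_smul])
    (by
      simp only [Matrix.fromCols_mul_fromRows, ← Matrix.mul_kronecker_mul, Matrix.mul_assoc,
        pull2 hJ, hR, hR', Matrix.one_mul, Matrix.mul_zero, Matrix.zero_mul, add_zero, zero_add,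
        Matrix.one_kronecker_one])
  simpa using this

theorem coker_case2 (e1 e2 : SplicingDatum) (hs : Function.Surjective e2.B1.mulVecLin) :
    cdim (e1.Binf * e1.B1) * cdim (e2.B1 * e2.B0) ≤ cdim (spliceD e1 e2) := by
  obtain ⟨P, R, hP, hR⟩ := exists_cokerMat (e1.Binf * e1.B1)
  obtain ⟨P', R', hP', hR'⟩ := exists_cokerMat (e2.B1 * e2.B0)
  obtain ⟨J, hJ⟩ := exists_rightInv_of_surj _ hs
  have z1 : P * e1.Binf * e1.B1 = 0 := by rw [Matrix.mul_assoc, hP]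
  have z2 : P' * e2.B1 * e2.B0 = 0 := by rw [Matrix.mul_assoc, hP']
  have c1 := fun (k : ℕ) (Z : Matrix (Fin k) _ F2) => comm3 e1.comm1 Z
  have c2 := fun (k : ℕ) (Z : Matrix (Fin k) _ F2) => comm3 e2.comm1 Z
  have := card_le_cdim (spliceD e1 e2)
    (Matrix.fromCols ((P * e1.Binf * e1.A1) ⊗ₖ (P' * e2.A1)) <| Matrix.fromCols 0 <|
      Matrix.fromCols 0 <| Matrix.fromCols (P ⊗ₖ (P' * e2.B1)) <|
      Matrix.fromCols ((P * e1.Binf * e1.A1) ⊗ₖ (P' * e2.B1)) 0)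
    (Matrix.fromRows 0 <| Matrix.fromRows 0 <| Matrix.fromRows 0 <|
      Matrix.fromRows (R ⊗ₖ (J * R')) <| Matrix.fromRows 0 0)
    (by
      simp only [spliceD, row1, row2, row3, row4, row5, row6, X1M, Matrix.mul_fromCols,
        Matrix.fromCols_mul_fromRows, Matrix.mul_add, ← Matrix.mul_kronecker_mul, Matrix.mul_one,
        ← Matrix.mul_assoc, Matrix.mul_zero, Matrix.zero_mul, add_zero, zero_add,
        Matrix.kronecker_zero, Matrix.zero_kronecker, z1, z2, c1, c2, add_self_F2,
        fromCols_add', fromCols_zero']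
      try abel_nf
      try simp [add_self_F2, fromCols_zero', two_smul])
    (by
      simp only [Matrix.fromCols_mul_fromRows, ← Matrix.mul_kronecker_mul, Matrix.mul_assoc,
        pull2 hJ, hR, hR', Matrix.one_mul, Matrix.mul_zero, Matrix.zero_mul, add_zero, zero_add,
        Matrix.one_kronecker_one])
  simpa using this

theorem coker_case3 (e1 e2 : SplicingDatum) (hs : Function.Surjective e2.Binf.mulVecLin) :
    cdim (e1.B1 * e1.B0) * cdim (e2.Binf * e2.B1) ≤ cdim (spliceD e1 e2) := by
  obtain ⟨P, R, hP, hR⟩ := exists_cokerMat (e1.B1 * e1.B0)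
  obtain ⟨P', R', hP', hR'⟩ := exists_cokerMat (e2.Binf * e2.B1)
  obtain ⟨J, hJ⟩ := exists_rightInv_of_surj _ hs
  have z1 : P * e1.B1 * e1.B0 = 0 := by rw [Matrix.mul_assoc, hP]
  have z2 : P' * e2.Binf * e2.B1 = 0 := by rw [Matrix.mul_assoc, hP']
  have c1 := fun (k : ℕ) (Z : Matrix (Fin k) _ F2) => comm3 e1.comm0 Z
  have c2 := fun (k : ℕ) (Z : Matrix (Fin k) _ F2) => comm3 e2.comminf Z
  have := card_le_cdim (spliceD e1 e2)
    (Matrix.fromCols (P ⊗ₖ (P' * e2.Binf)) <|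
      Matrix.fromCols ((P * e1.B1 * e1.A0) ⊗ₖ (P' * e2.Ainf)) <|
      Matrix.fromCols ((P * e1.B1 * e1.A0) ⊗ₖ (P' * e2.Binf)) <|
      Matrix.fromCols 0 <| Matrix.fromCols 0 0)
    (Matrix.fromRows (R ⊗ₖ (J * R')) <| Matrix.fromRows 0 <| Matrix.fromRows 0 <|
      Matrix.fromRows 0 <| Matrix.fromRows 0 0)
    (by
      simp only [spliceD, row1, row2, row3, row4, row5, row6, X1M, Matrix.mul_fromCols,
        Matrix.fromCols_mul_fromRows, Matrix.mul_add, ← Matrix.mul_kronecker_mul, Matrix.mul_one,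
        ← Matrix.mul_assoc, Matrix.mul_zero, Matrix.zero_mul, add_zero, zero_add,
        Matrix.kronecker_zero, Matrix.zero_kronecker, z1, z2, c1, c2, add_self_F2,
        fromCols_add', fromCols_zero']
      try abel_nf
      try simp [add_self_F2, fromCols_zero', two_smul])
    (by
      simp only [Matrix.fromCols_mul_fromRows, ← Matrix.mul_kronecker_mul, Matrix.mul_assoc,
        pull2 hJ, hR, hR', Matrix.one_mul, Matrix.mul_zero, Matrix.zero_mul, add_zero, zero_add,
        Matrix.one_kronecker_one])
  simpa using this

end SplicingDatum

open SplicingDatum in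
/-- Lemma on injective/surjective blocks, part 2.  The three conjuncts
correspond to the cyclic triples `(c,b,s) = (0,1,∞), (1,∞,0), (∞,0,1)`, with
`iota(0) = ∞`, `iota(1) = 1`, `iota(∞) = 0`. -/
theorem stmt9 (e1 e2 : SplicingDatum) :
    ((Function.Surjective e2.B0.mulVecLin ∧ Function.Injective e2.B1.mulVecLin) →
      kdim (spliceD e1 e2) ≥ kdim (e1.B1 * e1.B0) * kdim (e2.Binf * e2.B1) ∧
      cdim (spliceD e1 e2) ≥ cdim (e1.B0 * e1.Binf) * cdim (e2.B0 * e2.Binf)) ∧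
    ((Function.Surjective e2.B1.mulVecLin ∧ Function.Injective e2.Binf.mulVecLin) →
      kdim (spliceD e1 e2) ≥ kdim (e1.B0 * e1.Binf) * kdim (e2.B0 * e2.Binf) ∧
      cdim (spliceD e1 e2) ≥ cdim (e1.Binf * e1.B1) * cdim (e2.B1 * e2.B0)) ∧
    ((Function.Surjective e2.Binf.mulVecLin ∧ Function.Injective e2.B0.mulVecLin) →
      kdim (spliceD e1 e2) ≥ kdim (e1.Binf * e1.B1) * kdim (e2.B1 * e2.B0) ∧
      cdim (spliceD e1 e2) ≥ cdim (e1.B1 * e1.B0) * cdim (e2.Binf * e2.B1)) := by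
  exact ⟨fun h => ⟨ker_case1 e1 e2 h.2, coker_case1 e1 e2 h.1⟩,
    fun h => ⟨ker_case2 e1 e2 h.2, coker_case2 e1 e2 h.1⟩,
    fun h => ⟨ker_case3 e1 e2 h.2, coker_case3 e1 e2 h.1⟩⟩
end
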